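/- arXiv:2006.11429 — 2 statements merged into one kernel-verified Lean document; each statement's English description precedes it below -/
import Mathlib

section
/- Fix 1 < α < 2 and γ ≥ ε > 0. For an integer m ≥ 1 let Λ = {1−m, …, m} ⊆ ℤ (a periodic lattice of 2m sites, indices taken mod 2m). For j, k ∈ Λ set J_{j,k} = ∑_{n∈ℤ} |j − k + 2mn|^{−α} if j ≢ k (mod 2m) and J_{j,j} = 0; set N_{j,k} = 1 if j − k ≡ ±1 (mod 2m) and 0 otherwise; and set K_{j,k} = (γ−ε)·N_{j,k} + ε·J_{j,k}. For h : Λ → ℝ define Z(h) = ∑_{σ ∈ {−1,1}^Λ} exp(−(1/2)·∑_{j,k∈Λ} K_{j,k}·(σ_j − σ_k − h_j + h_k)²). Then Gaussian domination holds: Z(h) ≤ Z(0) for every h : Λ → ℝ. -/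
/-- The periodic lattice `Λ = {1−m, …, m}` of `2m` sites, as a type. -/
abbrev Site (m : ℕ) : Type := Finset.Icc (1 - (m : ℤ)) (m : ℤ)

/-- Ising spin configurations `{−1,1}^Λ`. -/
abbrev Spin (m : ℕ) : Type := Site m → ({-1, 1} : Finset ℝ)

/-- Periodized power-law coupling `J_{j,k} = ∑_{n∈ℤ} |j−k+2mn|^{−α}` for
`j ≢ k (mod 2m)`, and `0` for `j ≡ k (mod 2m)`. -/
noncomputable def Jc (α : ℝ) (m : ℕ) (j k : ℤ) : ℝ :=
  if (2 * (m : ℤ)) ∣ (j - k) then 0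
  else ∑' n : ℤ, |(j : ℝ) - (k : ℝ) + 2 * (m : ℝ) * (n : ℝ)| ^ (-α)

/-- Periodic nearest-neighbor indicator: `1` if `j − k ≡ ±1 (mod 2m)`. -/
noncomputable def Nc (m : ℕ) (j k : ℤ) : ℝ :=
  if (2 * (m : ℤ)) ∣ (j - k - 1) ∨ (2 * (m : ℤ)) ∣ (j - k + 1) then 1 else 0

/-- Total coupling `K_{j,k} = (γ−ε)·N_{j,k} + ε·J_{j,k}`. -/
noncomputable def Kc (α γ ε : ℝ) (m : ℕ) (j k : ℤ) : ℝ :=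
  (γ - ε) * Nc m j k + ε * Jc α m j k

/-- The Gaussian-domination partition function
`Z(h) = ∑_{σ∈{−1,1}^Λ} exp(−(1/2)∑_{j,k∈Λ} K_{j,k}(σ_j − σ_k − h_j + h_k)²)`.
Only the values of `h` on `Λ` are used. -/
noncomputable def Zf (α γ ε : ℝ) (m : ℕ) (h : ℤ → ℝ) : ℝ :=
  ∑ σ : Spin m, Real.exp (-(1 / 2) * ∑ j : Site m, ∑ k : Site m,
    Kc α γ ε m (j : ℤ) (k : ℤ) *
      ((σ j : ℝ) - (σ k : ℝ) - h (j : ℤ) + h (k : ℤ)) ^ 2)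

/-!
A power law `s ^ (-α)` is a positive superposition of exponentials `e ^ (-s t)`, so the coupling
between the two halves of the ring on either side of a bond is a positive semidefinite matrix `C`.
In `exp (-energy)` it enters through `exp (2 φ ⬝ C ψ)`, which by the Schur product theorem is a
positive semidefinite kernel in the fields `φ`, `ψ` on the two halves. Hence
`2 Z(h) ≤ Z(h⁺) + Z(h⁻)`, where `h⁺` and `h⁻` arise by reflecting one half of `h` onto the other.

Among the finitely many fields with values in the range of `h`, take a maximizer of `Z` with the
fewest bonds whose ends carry different values. Both reflections of it across such a bond are again
maximizers, and one of them has fewer such bonds. So the maximizer is constant, and constant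
fields do not change the energy.
-/

open Finset Matrix MeasureTheory

/-! ### Maximizers of least cost -/

theorem exists_le_of_forall_add_self_le {X M N : Type*}
    [AddCommMonoid M] [LinearOrder M] [IsOrderedCancelAddMonoid M]
    [AddCommMonoid N] [LinearOrder N] [IsOrderedCancelAddMonoid N]
    {s : Set X} (hs : s.Finite) {Z : X → M} {cost : X → N} {P : X → Prop}
    (hstep : ∀ g ∈ s, ¬P g → ∃ g₁ ∈ s, ∃ g₂ ∈ s,
      Z g + Z g ≤ Z g₁ + Z g₂ ∧ cost g₁ + cost g₂ < cost g + cost g)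
    {h : X} (hh : h ∈ s) : ∃ g, P g ∧ Z h ≤ Z g := by
  obtain ⟨g, hg, hmax⟩ :=
    s.exists_max_image (fun g => toLex (Z g, OrderDual.toDual (cost g))) hs ⟨h, hh⟩
  simp only [Prod.Lex.toLex_le_toLex, OrderDual.toDual_le_toDual] at hmax
  have hZ {g'} (hg' : g' ∈ s) : Z g' ≤ Z g := (hmax g' hg').elim le_of_lt fun h => h.1.le
  have hcost {g'} (hg' : g' ∈ s) (hle : Z g ≤ Z g') : cost g ≤ cost g' :=
    (hmax g' hg').elim (fun hlt => absurd hle hlt.not_ge) And.right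
  refine ⟨g, ?_, hZ hh⟩
  by_contra hP
  obtain ⟨g₁, hg₁, g₂, hg₂, hZle, hlt⟩ := hstep g hg hP
  have hle₁ : Z g ≤ Z g₁ := le_of_add_le_add_right (hZle.trans (by gcongr; exact hZ hg₂))
  have hle₂ : Z g ≤ Z g₂ := le_of_add_le_add_left (hZle.trans (by gcongr; exact hZ hg₁))
  exact hlt.not_ge (add_le_add (hcost hg₁ hle₁) (hcost hg₂ hle₂))

/-! ### Positive semidefinite kernels -/

section PosSemidef

variable {ι : Type*}

theorem posSemidef_of_hasSum {R κ : Type*} [Ring R] [PartialOrder R] [IsOrderedAddMonoid R]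
    [StarRing R] [TopologicalSpace R] [IsTopologicalRing R] [ContinuousStar R]
    [OrderClosedTopology R] {F : κ → Matrix ι ι R} {M : Matrix ι ι R}
    (hF : ∀ n, (F n).PosSemidef) (hM : ∀ i j, HasSum (fun n => F n i j) (M i j)) :
    M.PosSemidef := by
  refine ⟨IsHermitian.ext fun i j => ?_, fun x => ?_⟩
  · refine (hM j i).star.unique ?_
    simpa only [(hF _).isHermitian.apply] using hM i j
  · have hquad : HasSum (fun n => x.sum fun i xi => x.sum fun j xj => star xi * F n i j * xj)
        (x.sum fun i xi => x.sum fun j xj => star xi * M i j * xj) :=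
      hasSum_sum fun i _ => hasSum_sum fun j _ => ((hM i j).mul_left _).mul_right _
    exact hquad.nonneg fun n => (hF n).2 x

theorem posSemidef_integral {Ω : Type*} [MeasurableSpace Ω] {μ : Measure Ω}
    {F : Ω → Matrix ι ι ℝ} (hF : ∀ᵐ t ∂μ, (F t).PosSemidef)
    (hint : ∀ i j, Integrable (fun t => F t i j) μ) :
    (of fun i j => ∫ t, F t i j ∂μ).PosSemidef := by
  refine ⟨IsHermitian.ext fun i j => ?_, fun x => ?_⟩
  · exact integral_congr_ae (hF.mono fun t ht => ht.isHermitian.apply i j)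
  · have hquad : x.sum (fun i xi => x.sum fun j xj => star xi * (∫ t, F t i j ∂μ) * xj)
        = ∫ t, x.sum (fun i xi => x.sum fun j xj => star xi * F t i j * xj) ∂μ := by
      have hterm i j := ((hint i j).const_mul (star (x i))).mul_const (x j)
      simp only [Finsupp.sum]
      rw [integral_finsetSum _ fun i _ => integrable_finsetSum _ fun j _ => hterm i j]
      refine sum_congr rfl fun i _ => ?_
      rw [integral_finsetSum _ fun j _ => hterm i j]
      simp only [integral_mul_const, integral_const_mul]
    simp only [of_apply, hquad]
    exact integral_nonneg_of_ae (hF.mono fun t ht => ht.2 x)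

theorem posSemidef_mul_self (f : ι → ℝ) : (of fun i j => f i * f j).PosSemidef := by
  refine ⟨IsHermitian.ext fun i j => by simp [mul_comm], fun x => ?_⟩
  have hsq : x.sum (fun i xi => x.sum fun j xj => star xi * (f i * f j) * xj)
      = (x.sum fun i xi => xi * f i) ^ 2 := by
    simp only [Finsupp.sum, sq, sum_mul_sum, star_trivial]
    exact sum_congr rfl fun i _ => sum_congr rfl fun j _ => by ring
  simpa only [of_apply, hsq] using sq_nonneg _

theorem posSemidef_map_pow {M : Matrix ι ι ℝ} (hM : M.PosSemidef) (n : ℕ) :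
    (M.map (· ^ n)).PosSemidef := by
  induction n with
  | zero => simpa using! posSemidef_mul_self (1 : ι → ℝ)
  | succ n ih => simpa only [pow_succ] using! ih.hadamard hM

theorem posSemidef_map_exp {M : Matrix ι ι ℝ} (hM : M.PosSemidef) :
    (M.map Real.exp).PosSemidef := by
  refine posSemidef_of_hasSum (F := fun n : ℕ => (n.factorial : ℝ)⁻¹ • M.map (· ^ n))
    (fun n => (posSemidef_map_pow hM n).smul (by positivity)) fun i j => ?_
  simpa [Real.exp_eq_exp_ℝ, div_eq_inv_mul] using NormedSpace.expSeries_div_hasSum_exp (M i j)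

theorem posSemidef_dotProduct_mulVec [Fintype ι] {C : Matrix ι ι ℝ} (hC : C.PosSemidef) :
    (of fun φ ψ : ι → ℝ => φ ⬝ᵥ C *ᵥ ψ).PosSemidef := by
  refine ⟨IsHermitian.ext fun φ ψ => ?_, fun x => ?_⟩
  · rw [of_apply, of_apply, star_trivial, dotProduct_mulVec, ← mulVec_transpose,
      ← conjTranspose_eq_transpose_of_trivial, hC.isHermitian.eq, dotProduct_comm]
  · have hquad : x.sum (fun φ c => x.sum fun ψ d => star c * (φ ⬝ᵥ C *ᵥ ψ) * d)
        = (x.sum fun φ c => c • φ) ⬝ᵥ C *ᵥ (x.sum fun φ c => c • φ) := by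
      simp only [Finsupp.sum, mulVec_sum, mulVec_smul, sum_dotProduct, dotProduct_sum,
        smul_dotProduct, dotProduct_smul, smul_eq_mul, star_trivial, mul_sum]
      rw [sum_comm]
      exact sum_congr rfl fun φ _ => sum_congr rfl fun ψ _ => by ring
    simpa only [of_apply, hquad] using! hC.dotProduct_mulVec_nonneg (x.sum fun φ c => c • φ)

-- `s ^ (-α) = Γ(α)⁻¹ ∫ t ^ (α - 1) e ^ (-s t) dt` is a superposition of the product kernels
-- `e ^ (-p i t) * e ^ (-p j t)`.
theorem posSemidef_add_rpow_neg {α : ℝ} (hα : 0 < α) {p : ι → ℝ} (hp : ∀ i, 0 < p i) :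
    (of fun i j => (p i + p j) ^ (-α)).PosSemidef := by
  let F : ℝ → Matrix ι ι ℝ := fun t =>
    t ^ (α - 1) • of fun i j => Real.exp (-(p i * t)) * Real.exp (-(p j * t))
  have hF_apply (t : ℝ) (i j : ι) : F t i j = t ^ (α - 1) * Real.exp (-((p i + p j) * t)) := by
    simp [F, ← Real.exp_add, add_mul, add_comm]
  have hF : ∀ᵐ t ∂volume.restrict (Set.Ioi 0), (F t).PosSemidef := by
    filter_upwards [ae_restrict_mem measurableSet_Ioi] with t ht
    exact (posSemidef_mul_self _).smul (Real.rpow_nonneg (le_of_lt ht) _)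
  have hint (i j : ι) : IntegrableOn (fun t => F t i j) (Set.Ioi 0) := by
    simpa only [hF_apply, Real.rpow_one, neg_mul] using
      integrableOn_rpow_mul_exp_neg_mul_rpow (p := 1) (s := α - 1) (by linarith) one_pos
        (add_pos (hp i) (hp j))
  have hΓ := Real.Gamma_pos_of_pos hα
  convert (posSemidef_integral hF hint).smul (inv_nonneg.2 hΓ.le) using 1
  ext i j
  have hs := add_pos (hp i) (hp j)
  simp only [of_apply, Matrix.smul_apply, smul_eq_mul, hF_apply]
  rw [Real.integral_rpow_mul_exp_neg_mul_Ioi hα hs, one_div, Real.inv_rpow hs.le,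
    Real.rpow_neg hs.le]
  field_simp

theorem posSemidef_abs_add_rpow_neg {α : ℝ} (hα : 0 < α) {p : ι → ℝ}
    (hp : (∀ i, 0 < p i) ∨ ∀ i, p i < 0) : (of fun i j => |p i + p j| ^ (-α)).PosSemidef := by
  rcases hp with hpos | hneg
  · simpa only [abs_of_pos (add_pos (hpos _) (hpos _))] using posSemidef_add_rpow_neg hα hpos
  · simpa only [abs_of_neg (add_neg (hneg _) (hneg _)), neg_add] using
      posSemidef_add_rpow_neg hα fun i => neg_pos.2 (hneg i)

theorem two_mul_sum_le_of_posSemidef {X κ : Type*} [Fintype ι] [Fintype κ] {M : Matrix X X ℝ}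
    (hM : M.PosSemidef) (p : ι → X) (q : κ → X) :
    2 * ∑ s, ∑ t, M (p s) (q t)
      ≤ (∑ s, ∑ s', M (p s) (p s')) + ∑ t, ∑ t', M (q t) (q t') := by
  have hnonneg := (hM.submatrix (Sum.elim p q)).dotProduct_mulVec_nonneg (Sum.elim 1 (-1))
  have hsymm : ∑ t, ∑ s, M (q t) (p s) = ∑ s, ∑ t, M (p s) (q t) := by
    rw [sum_comm]
    exact sum_congr rfl fun s _ => sum_congr rfl fun t _ => hM.isHermitian.apply _ _
  simp only [dotProduct, mulVec, Pi.star_apply, star_trivial, submatrix_apply,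
    Fintype.sum_sum_type, Sum.elim_inl, Sum.elim_inr, Pi.one_apply, Pi.neg_apply, mul_one, one_mul,
    mul_neg, neg_mul, neg_neg, neg_add_rev, sum_neg_distrib, sum_add_distrib, hsymm] at hnonneg
  linarith

end PosSemidef

/-! ### Partition functions and reflection positivity -/

section PartitionFunction

variable {Λ A S : Type*} [Fintype Λ] [Fintype A] [Fintype S]

/-- The energy `(1/2) ∑_{j,k} K_{j,k} (φ_j − φ_k)²` of the real field `φ`. -/
noncomputable def energy (K : Matrix Λ Λ ℝ) (φ : Λ → ℝ) : ℝ :=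
  1 / 2 * ∑ j, ∑ k, K j k * (φ j - φ k) ^ 2

/-- The part of the energy of a reflection-symmetric system that depends on the field on one half
only: `I` is the coupling inside that half and `C` the coupling to its mirror image. -/
noncomputable def halfEnergy (I C : Matrix A A ℝ) (φ : A → ℝ) : ℝ :=
  energy I φ + ∑ a, ∑ b, C a b * φ a ^ 2

theorem energy_submatrix_equiv (K : Matrix Λ Λ ℝ) (e : A ≃ Λ) (φ : Λ → ℝ) :
    energy (K.submatrix e e) (φ ∘ e) = energy K φ := by
  unfold energy
  rw [← e.sum_comp]
  simp only [← e.sum_comp (fun k => K _ k * _), submatrix_apply, Function.comp_apply]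

theorem energy_fromBlocks (I : Matrix A A ℝ) {C : Matrix A A ℝ} (hC : C.IsSymm) (φ ψ : A → ℝ) :
    energy (fromBlocks I C C I) (Sum.elim φ ψ)
      = halfEnergy I C φ + halfEnergy I C ψ - 2 * (φ ⬝ᵥ C *ᵥ ψ) := by
  have hcross : ∑ a, ∑ b, C a b * (φ a - ψ b) ^ 2
      = (∑ a, ∑ b, C a b * φ a ^ 2) + (∑ a, ∑ b, C a b * ψ a ^ 2) - 2 * (φ ⬝ᵥ C *ᵥ ψ) := by
    rw [sum_comm (f := fun a b => C a b * ψ a ^ 2)]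
    simp only [hC.apply, dotProduct, mulVec, mul_sum, ← sum_add_distrib, ← sum_sub_distrib]
    exact sum_congr rfl fun a _ => sum_congr rfl fun b _ => by ring
  have hcross_symm :
      ∑ a, ∑ b, C a b * (ψ a - φ b) ^ 2 = ∑ a, ∑ b, C a b * (φ a - ψ b) ^ 2 := by
    rw [sum_comm]
    exact sum_congr rfl fun a _ => sum_congr rfl fun b _ => by rw [hC.apply]; ring
  simp only [energy, halfEnergy, Fintype.sum_sum_type, fromBlocks_apply₁₁, fromBlocks_apply₁₂,
    fromBlocks_apply₂₁, fromBlocks_apply₂₂, Sum.elim_inl, Sum.elim_inr, sum_add_distrib,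
    hcross_symm, hcross]
  ring

theorem posSemidef_exp_neg_energy_fromBlocks (I : Matrix A A ℝ) {C : Matrix A A ℝ}
    (hC : C.PosSemidef) :
    (of fun φ ψ => Real.exp (-energy (fromBlocks I C C I) (Sum.elim φ ψ))).PosSemidef := by
  have hsymm : C.IsSymm := by
    rw [IsSymm, ← conjTranspose_eq_transpose_of_trivial, hC.isHermitian.eq]
  have hfactor : (of fun φ ψ => Real.exp (-energy (fromBlocks I C C I) (Sum.elim φ ψ)))
      = (of fun φ ψ => Real.exp (-halfEnergy I C φ) * Real.exp (-halfEnergy I C ψ))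
        ⊙ ((2 : ℝ) • of fun φ ψ => φ ⬝ᵥ C *ᵥ ψ).map Real.exp := by
    ext φ ψ
    simp only [of_apply, energy_fromBlocks I hsymm, hadamard_apply, map_apply,
      Matrix.smul_apply, smul_eq_mul, ← Real.exp_add]
    ring_nf
  rw [hfactor]
  exact (posSemidef_mul_self _).hadamard
    (posSemidef_map_exp ((posSemidef_dotProduct_mulVec hC).smul zero_le_two))

variable [DecidableEq Λ] [DecidableEq A]

/-- The partition function with coupling `K` and shift `h` of spins with finite state space `S`,
a state `s` having the real value `v s`. -/
noncomputable def partitionFunction (v : S → ℝ) (K : Matrix Λ Λ ℝ) (h : Λ → ℝ) : ℝ :=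
  ∑ σ : Λ → S, Real.exp (-energy K (v ∘ σ - h))

theorem partitionFunction_submatrix_equiv (v : S → ℝ) (K : Matrix Λ Λ ℝ) (e : A ≃ Λ)
    (h : A → ℝ) :
    partitionFunction v (K.submatrix e e) h = partitionFunction v K (h ∘ e.symm) := by
  refine Fintype.sum_equiv (e.arrowCongr (Equiv.refl S)) _ _ fun σ => ?_
  rw [← energy_submatrix_equiv K e]
  congr 3
  ext a
  simp

theorem partitionFunction_const (v : S → ℝ) (K : Matrix Λ Λ ℝ) (c : ℝ) :
    partitionFunction v K (Function.const Λ c) = partitionFunction v K 0 := by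
  simp [partitionFunction, energy]

theorem partitionFunction_sumElim (v : S → ℝ) (K : Matrix (A ⊕ A) (A ⊕ A) ℝ) (u w : A → ℝ) :
    partitionFunction v K (Sum.elim u w)
      = ∑ s : A → S, ∑ t : A → S, Real.exp (-energy K (Sum.elim (v ∘ s - u) (v ∘ t - w))) := by
  rw [← Fintype.sum_prod_type']
  refine Fintype.sum_equiv (Equiv.sumArrowEquivProdArrow A A S) _ _ fun σ => ?_
  congr 3
  ext (a | a) <;> rfl

theorem two_mul_partitionFunction_sumElim_le (v : S → ℝ) (I : Matrix A A ℝ) {C : Matrix A A ℝ}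
    (hC : C.PosSemidef) (u w : A → ℝ) :
    2 * partitionFunction v (fromBlocks I C C I) (Sum.elim u w)
      ≤ partitionFunction v (fromBlocks I C C I) (Sum.elim u u)
        + partitionFunction v (fromBlocks I C C I) (Sum.elim w w) := by
  simp only [partitionFunction_sumElim]
  exact two_mul_sum_le_of_posSemidef (posSemidef_exp_neg_energy_fromBlocks I hC)
    (fun s : A → S => v ∘ s - u) (fun t : A → S => v ∘ t - w)

end PartitionFunction

/-! ### The ring and its reflections -/

section Ring

theorem one_add_add_ne_zero {m : ℕ} (i j : Fin m) :
    (1 + (i : ℕ) + (j : ℕ) : ZMod (2 * m)) ≠ 0 := by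
  intro hzero
  have hdvd : 2 * m ∣ 1 + i + j := (ZMod.natCast_eq_zero_iff _ _).1 (by exact_mod_cast hzero)
  have := Nat.le_of_dvd (by omega) hdvd
  omega

/-- The ring of `2 * m` sites cut at the bond `{a, a + 1}` and at the opposite bond: the left
summand runs upwards from `a + 1` and the right summand, its mirror image, downwards from `a`. -/
noncomputable def bondEquiv (m : ℕ) [NeZero m] (a : ZMod (2 * m)) :
    Fin m ⊕ Fin m ≃ ZMod (2 * m) :=
  Equiv.ofBijective (Sum.elim (fun i => a + 1 + (i : ℕ)) fun i => a - (i : ℕ)) <| by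
    have hcast : Function.Injective fun i : Fin m => ((i : ℕ) : ZMod (2 * m)) := fun i j hij =>
      Fin.ext (CharP.natCast_injOn_Iio (ZMod (2 * m)) (2 * m)
        (Set.mem_Iio.2 (by omega)) (Set.mem_Iio.2 (by omega)) hij)
    have hdisjoint (i j : Fin m) : a + 1 + ((i : ℕ) : ZMod (2 * m)) ≠ a - (j : ℕ) := fun hij =>
      one_add_add_ne_zero i j (by linear_combination hij)
    exact (Fintype.bijective_iff_injective_and_card _).2
      ⟨((add_right_injective _).comp hcast).sumElim (sub_right_injective.comp hcast) hdisjoint,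
        by simp [ZMod.card, two_mul]⟩

section Glue

variable {β : Type*}

/-- The configuration on the ring with values `u` on the half that starts at `a + 1` and `w` on the
half that ends at `a`, the latter listed in mirror order. -/
noncomputable def glue {m : ℕ} [NeZero m] (a : ZMod (2 * m)) (u w : Fin m → β) :
    ZMod (2 * m) → β :=
  Sum.elim u w ∘ (bondEquiv m a).symm

section Halves

variable {m : ℕ} [NeZero m] (a : ZMod (2 * m))

theorem bondEquiv_inl_zero : bondEquiv m a (.inl 0) = a + 1 := by
  simp [bondEquiv]

theorem bondEquiv_inr_zero : bondEquiv m a (.inr 0) = a := by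
  simp [bondEquiv]

theorem glue_bondEquiv (u w : Fin m → β) (i : Fin m ⊕ Fin m) :
    glue a u w (bondEquiv m a i) = Sum.elim u w i := by
  simp [glue]

theorem glue_add_one (u w : Fin m → β) : glue a u w (a + 1) = u 0 := by
  simpa only [bondEquiv_inl_zero, Sum.elim_inl] using glue_bondEquiv a u w (.inl 0)

theorem glue_self (u w : Fin m → β) : glue a u w a = w 0 := by
  simpa only [bondEquiv_inr_zero, Sum.elim_inr] using glue_bondEquiv a u w (.inr 0)

theorem exists_glue_eq (g : ZMod (2 * m) → β) : ∃ u w, glue a u w = g :=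
  ⟨g ∘ bondEquiv m a ∘ Sum.inl, g ∘ bondEquiv m a ∘ Sum.inr, by
    ext x
    obtain ⟨i | i, rfl⟩ := (bondEquiv m a).surjective x <;> rw [glue_bondEquiv] <;> rfl⟩

theorem range_glue (u w : Fin m → β) :
    Set.range (glue a u w) = Set.range u ∪ Set.range w := by
  rw [glue, EquivLike.range_comp, Set.Sum.elim_range]

end Halves

section DomainWalls

/-- The number of bonds of the ring `ZMod n` whose two ends carry different values of `g`. -/
def domainWalls {n : ℕ} [NeZero n] [DecidableEq β] (g : ZMod n → β) : ℕ :=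
  #{x | g x ≠ g (x + 1)}

variable {k : ℕ} (a : ZMod (2 * (k + 1)))

theorem bondEquiv_inl_castSucc_add_one (i : Fin k) :
    bondEquiv (k + 1) a (.inl i.castSucc) + 1 = bondEquiv (k + 1) a (.inl i.succ) := by
  simp [bondEquiv, add_assoc]

theorem bondEquiv_inl_last_add_one :
    bondEquiv (k + 1) a (.inl (Fin.last k)) + 1 = bondEquiv (k + 1) a (.inr (Fin.last k)) := by
  have hring : ((2 * (k + 1) : ℕ) : ZMod (2 * (k + 1))) = 0 := ZMod.natCast_self _
  push_cast at hring
  simp only [bondEquiv, Equiv.ofBijective_apply, Sum.elim_inl, Sum.elim_inr, Fin.val_last]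
  linear_combination hring

theorem bondEquiv_inr_succ_add_one (i : Fin k) :
    bondEquiv (k + 1) a (.inr i.succ) + 1 = bondEquiv (k + 1) a (.inr i.castSucc) := by
  simp only [bondEquiv, Equiv.ofBijective_apply, Sum.elim_inr, Fin.val_succ, Fin.val_castSucc]
  push_cast
  ring

variable [DecidableEq β] (u w : Fin (k + 1) → β)

theorem domainWalls_glue :
    domainWalls (glue a u w)
      = #{i : Fin k | u i.castSucc ≠ u i.succ} + (if u (Fin.last k) ≠ w (Fin.last k) then 1 else 0)
        + ((if w 0 ≠ u 0 then 1 else 0) + #{i : Fin k | w i.succ ≠ w i.castSucc}) := by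
  simp only [domainWalls, card_filter]
  rw [← (bondEquiv (k + 1) a).sum_comp, Fintype.sum_sum_type, Fin.sum_univ_castSucc,
    Fin.sum_univ_succ (n := k)]
  simp only [bondEquiv_inl_castSucc_add_one, bondEquiv_inl_last_add_one,
    bondEquiv_inr_zero, bondEquiv_inr_succ_add_one, glue_self, glue_add_one, glue_bondEquiv,
    Sum.elim_inl, Sum.elim_inr]

theorem domainWalls_glue_add_lt {u w : Fin (k + 1) → β} (h : u 0 ≠ w 0) :
    domainWalls (glue a u u) + domainWalls (glue a w w)
      < domainWalls (glue a u w) + domainWalls (glue a u w) := by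
  simp only [domainWalls_glue, ne_comm (a := u (Fin.succ _)), ne_comm (a := w (Fin.succ _)),
    if_pos h.symm, ne_eq, not_true_eq_false, if_false]
  omega

end DomainWalls

end Glue

/-- The translation invariant coupling `K x y = F (x - y)` on the ring of `2 * m` sites is
reflection positive: it is symmetric, and the coupling of the `i`-th site on one side of a bond to
the `j`-th site on the other side is a positive semidefinite matrix. -/
structure IsReflectionPositive {m : ℕ} (F : ZMod (2 * m) → ℝ) : Prop where
  even : Function.Even F
  posSemidef : (of fun i j : Fin m => F (1 + (i : ℕ) + (j : ℕ))).PosSemidef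

namespace IsReflectionPositive

variable {m : ℕ} {F G : ZMod (2 * m) → ℝ}

theorem add (hF : IsReflectionPositive F) (hG : IsReflectionPositive G) :
    IsReflectionPositive (F + G) :=
  ⟨hF.even.add hG.even, hF.posSemidef.add hG.posSemidef⟩

theorem const_smul (hF : IsReflectionPositive F) {c : ℝ} (hc : 0 ≤ c) :
    IsReflectionPositive (c • F) :=
  ⟨hF.even.const_smul c, hF.posSemidef.smul hc⟩

variable [NeZero m] {S : Type*} [Fintype S]

theorem circulant_submatrix_bondEquiv (hF : IsReflectionPositive F) (a : ZMod (2 * m)) :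
    (circulant F).submatrix (bondEquiv m a) (bondEquiv m a)
      = fromBlocks (of fun i j : Fin m => F ((i : ℕ) - (j : ℕ)))
          (of fun i j : Fin m => F (1 + (i : ℕ) + (j : ℕ)))
          (of fun i j : Fin m => F (1 + (i : ℕ) + (j : ℕ)))
          (of fun i j : Fin m => F ((i : ℕ) - (j : ℕ))) := by
  ext (i | i) (j | j) <;>
    simp only [submatrix_apply, circulant_apply, bondEquiv, Equiv.ofBijective_apply, Sum.elim_inl,
      Sum.elim_inr, fromBlocks_apply₁₁, fromBlocks_apply₁₂, fromBlocks_apply₂₁,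
      fromBlocks_apply₂₂, of_apply]
  · ring_nf
  · ring_nf
  · rw [← hF.even]
    ring_nf
  · rw [← hF.even]
    ring_nf

theorem partitionFunction_glue_add_self_le (hF : IsReflectionPositive F) (v : S → ℝ)
    (a : ZMod (2 * m)) (u w : Fin m → ℝ) :
    partitionFunction v (circulant F) (glue a u w) + partitionFunction v (circulant F) (glue a u w)
      ≤ partitionFunction v (circulant F) (glue a u u)
        + partitionFunction v (circulant F) (glue a w w) := by
  have hglue (u w : Fin m → ℝ) : partitionFunction v (circulant F) (glue a u w)
      = partitionFunction v ((circulant F).submatrix (bondEquiv m a) (bondEquiv m a))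
          (Sum.elim u w) :=
    (partitionFunction_submatrix_equiv v _ _ _).symm
  rw [hglue, hglue, hglue, hF.circulant_submatrix_bondEquiv, ← two_mul]
  exact two_mul_partitionFunction_sumElim_le v _ hF.posSemidef u w

theorem exists_fewer_domainWalls (hF : IsReflectionPositive F) (v : S → ℝ) {g : ZMod (2 * m) → ℝ}
    {a : ZMod (2 * m)} (ha : g a ≠ g (a + 1)) :
    ∃ g₁, Set.range g₁ ⊆ Set.range g ∧ ∃ g₂, Set.range g₂ ⊆ Set.range g ∧
      partitionFunction v (circulant F) g + partitionFunction v (circulant F) g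
        ≤ partitionFunction v (circulant F) g₁ + partitionFunction v (circulant F) g₂ ∧
      domainWalls g₁ + domainWalls g₂ < domainWalls g + domainWalls g := by
  obtain ⟨k, rfl⟩ := Nat.exists_eq_succ_of_ne_zero (NeZero.ne m)
  obtain ⟨u, w, rfl⟩ := exists_glue_eq a g
  rw [glue_self, glue_add_one] at ha
  exact ⟨glue a u u, by simp [range_glue], glue a w w, by simp [range_glue],
    hF.partitionFunction_glue_add_self_le v a u w, domainWalls_glue_add_lt a ha.symm⟩

theorem partitionFunction_le (hF : IsReflectionPositive F) (v : S → ℝ) (h : ZMod (2 * m) → ℝ) :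
    partitionFunction v (circulant F) h ≤ partitionFunction v (circulant F) 0 := by
  have hfin : {g : ZMod (2 * m) → ℝ | Set.range g ⊆ Set.range h}.Finite :=
    (Set.Finite.pi' fun _ => Set.finite_range h).subset fun g hg x => hg (Set.mem_range_self x)
  obtain ⟨g, hg, hle⟩ := exists_le_of_forall_add_self_le hfin
    (Z := partitionFunction v (circulant F)) (cost := domainWalls)
    (P := fun g => Function.Periodic g 1) (fun g hg hwall => by
      simp only [Function.Periodic, not_forall] at hwall
      obtain ⟨a, ha⟩ := hwall
      obtain ⟨g₁, hg₁, g₂, hg₂, hstep⟩ := hF.exists_fewer_domainWalls v (Ne.symm ha)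
      exact ⟨g₁, hg₁.trans hg, g₂, hg₂.trans hg, hstep⟩) (Set.Subset.refl (Set.range h))
  have hconst : g = Function.const _ (g 0) := by
    ext x
    simpa using hg.nat_mul_eq x.val
  rwa [hconst, partitionFunction_const] at hle

end IsReflectionPositive

end Ring

/-! ### The nearest-neighbour and power-law couplings -/

section Couplings

/-- The nearest-neighbour coupling on the ring `ZMod n`, as a function of the difference of two
sites. -/
noncomputable def nearestNeighbor (n : ℕ) (x : ZMod n) : ℝ :=
  if x = 1 ∨ x = -1 then 1 else 0

/-- The power law `|d| ^ (-α)` periodized to the ring `ZMod n`, as a function of the difference of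
two distinct sites: the sum over all integers `d` representing that difference. -/
noncomputable def periodizedPower (α : ℝ) (n : ℕ) (x : ZMod n) : ℝ :=
  if x = 0 then 0 else ∑' d : {d : ℤ // (d : ZMod n) = x}, |(d : ℝ)| ^ (-α)

/-- The representatives `d + n * t` of the residue class of `d` modulo `n`. -/
def residueClassEquiv (n : ℕ) [NeZero n] (d : ℤ) : ℤ ≃ {e : ℤ // (e : ZMod n) = d} where
  toFun t := ⟨d + n * t, by simp⟩
  invFun e := (e - d) / n
  left_inv t := by simp [NeZero.ne n]
  right_inv e := by
    have hdvd : (n : ℤ) ∣ e - d := (ZMod.intCast_eq_intCast_iff_dvd_sub _ _ _).1 e.2.symm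
    simp [Int.mul_ediv_cancel' hdvd]

theorem Nc_eq_nearestNeighbor (m : ℕ) (j k : ℤ) :
    Nc m j k = nearestNeighbor (2 * m) ((j : ZMod (2 * m)) - k) := by
  have hdvd (d : ℤ) : 2 * (m : ℤ) ∣ d ↔ (d : ZMod (2 * m)) = 0 := by
    exact_mod_cast (ZMod.intCast_zmod_eq_zero_iff_dvd d (2 * m)).symm
  simp only [Nc, nearestNeighbor, hdvd, Int.cast_sub, Int.cast_add, Int.cast_one, sub_eq_zero,
    add_eq_zero_iff_eq_neg]

theorem periodizedPower_intCast (α : ℝ) {n : ℕ} [NeZero n] {d : ℤ} (hd : (d : ZMod n) ≠ 0) :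
    periodizedPower α n d = ∑' t : ℤ, |(d : ℝ) + n * t| ^ (-α) := by
  rw [periodizedPower, if_neg hd, ← (residueClassEquiv n d).tsum_eq]
  simp [residueClassEquiv]

theorem Jc_eq_periodizedPower (α : ℝ) (m : ℕ) [NeZero m] (j k : ℤ) :
    Jc α m j k = periodizedPower α (2 * m) ((j : ZMod (2 * m)) - k) := by
  have hdvd : 2 * (m : ℤ) ∣ j - k ↔ ((j - k : ℤ) : ZMod (2 * m)) = 0 := by
    exact_mod_cast (ZMod.intCast_zmod_eq_zero_iff_dvd (j - k) (2 * m)).symm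
  simp only [Jc, ← Int.cast_sub, hdvd]
  split_ifs with h
  · rw [h, periodizedPower, if_pos rfl]
  · rw [periodizedPower_intCast α h]
    push_cast
    rfl

theorem hasSum_periodizedPower {α : ℝ} (hα : 1 < α) {n : ℕ} [NeZero n] {d : ℤ}
    (hd : (d : ZMod n) ≠ 0) :
    HasSum (fun t : ℤ => |(d : ℝ) + n * t| ^ (-α)) (periodizedPower α n d) := by
  have hinj : Function.Injective fun t : ℤ => d + n * t :=
    (add_right_injective d).comp (mul_right_injective₀ (Nat.cast_ne_zero.2 (NeZero.ne n)))
  have hsummable := (Real.summable_abs_int_rpow hα).comp_injective hinj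
  rw [periodizedPower_intCast α hd]
  simpa [Function.comp_def] using hsummable.hasSum

theorem one_add_add_eq_one_or_neg_one_iff {m : ℕ} (i j : Fin m) :
    (1 + (i : ℕ) + (j : ℕ) : ZMod (2 * m)) = 1 ∨ (1 + (i : ℕ) + (j : ℕ) : ZMod (2 * m)) = -1 ↔
      i = j ∧ ((i : ℕ) = 0 ∨ (i : ℕ) + 1 = m) := by
  have hone : (1 + (i : ℕ) + (j : ℕ) : ZMod (2 * m)) = 1 ↔ 2 * m ∣ (i + j : ℕ) := by
    rw [← ZMod.natCast_eq_zero_iff, add_assoc, add_eq_left, Nat.cast_add]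
  have hneg_one : (1 + (i : ℕ) + (j : ℕ) : ZMod (2 * m)) = -1 ↔ 2 * m ∣ (1 + i + j + 1 : ℕ) := by
    rw [← ZMod.natCast_eq_zero_iff, eq_neg_iff_add_eq_zero]
    push_cast
    rfl
  rw [hone, hneg_one, Fin.ext_iff]
  constructor
  · rintro (h | h)
    · have := Nat.eq_zero_of_dvd_of_lt h (by omega)
      omega
    · have := Nat.le_of_dvd (by omega) h
      omega
  · rintro ⟨hij, h | h⟩
    · exact .inl ⟨0, by omega⟩
    · exact .inr ⟨1, by omega⟩

theorem isReflectionPositive_nearestNeighbor (m : ℕ) :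
    IsReflectionPositive (nearestNeighbor (2 * m)) where
  even x := by simp only [nearestNeighbor, neg_eq_iff_eq_neg, neg_neg, or_comm]
  posSemidef := by
    have hdiagonal : (of fun i j : Fin m => nearestNeighbor (2 * m) (1 + (i : ℕ) + (j : ℕ)))
        = diagonal fun i : Fin m => if (i : ℕ) = 0 ∨ (i : ℕ) + 1 = m then 1 else 0 := by
      ext i j
      simp only [of_apply, nearestNeighbor, one_add_add_eq_one_or_neg_one_iff, diagonal_apply,
        ite_and]
    rw [hdiagonal]
    exact PosSemidef.diagonal fun i => by dsimp only; split_ifs <;> simp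

theorem isReflectionPositive_periodizedPower {α : ℝ} (hα : 1 < α) (m : ℕ) [NeZero m] :
    IsReflectionPositive (periodizedPower α (2 * m)) where
  even x := by
    have hneg : ∑' d : {d : ℤ // (d : ZMod (2 * m)) = x}, |(-(d : ℤ) : ℝ)| ^ (-α)
        = ∑' d : {d : ℤ // (d : ZMod (2 * m)) = -x}, |(d : ℝ)| ^ (-α) := by
      simpa using ((Equiv.neg ℤ).subtypeEquiv (p := fun d : ℤ => (d : ZMod (2 * m)) = x)
        (q := fun d : ℤ => (d : ZMod (2 * m)) = -x) (by simp)).tsum_eq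
        fun d => |((d : ℤ) : ℝ)| ^ (-α)
    simp only [periodizedPower, neg_eq_zero, ← hneg, abs_neg]
  posSemidef := by
    -- Splitting the shift `2 * m * t` evenly between the two sites writes their distance as a sum
    -- of two numbers of the same sign.
    let p (t : ℤ) (i : Fin m) : ℝ := 1 / 2 + (i : ℕ) + m * t
    have hp (t : ℤ) : (∀ i, 0 < p t i) ∨ ∀ i, p t i < 0 := by
      rcases le_or_gt 0 t with ht | ht
      · exact .inl fun i => by positivity
      · refine .inr fun i => ?_
        have hi : ((i : ℕ) : ℝ) + 1 ≤ m := by exact_mod_cast i.2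
        have ht' : (t : ℝ) ≤ -1 := by exact_mod_cast Int.le_sub_one_of_lt ht
        have hmt : (m : ℝ) * t ≤ m * (-1) := by gcongr
        simp only [p]
        linarith
    refine posSemidef_of_hasSum
      (fun t => posSemidef_abs_add_rpow_neg (zero_lt_one.trans hα) (hp t)) fun i j => ?_
    have hne : ((1 + i + j : ℤ) : ZMod (2 * m)) ≠ 0 := by
      exact_mod_cast one_add_add_ne_zero i j
    have hadd (t : ℤ) : p t i + p t j = ((1 + i + j : ℤ) : ℝ) + (2 * m : ℕ) * t := by
      simp only [p]
      push_cast
      ring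
    simpa [hadd] using hasSum_periodizedPower hα hne

/-- The sites `1 - m, …, m` as residues modulo `2 * m`. -/
noncomputable def siteEquiv (m : ℕ) [NeZero m] : Site m ≃ ZMod (2 * m) :=
  Equiv.ofBijective (fun j => ((j : ℤ) : ZMod (2 * m))) <| by
    refine (Fintype.bijective_iff_injective_and_card _).2 ⟨fun j k hjk => ?_, ?_⟩
    · have hj := mem_Icc.1 j.2
      have hk := mem_Icc.1 k.2
      have hzero := Int.eq_zero_of_abs_lt_dvd ((ZMod.intCast_eq_intCast_iff_dvd_sub _ _ _).1 hjk)
        (by rw [abs_lt]; push_cast; omega)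
      exact Subtype.ext (by omega)
    · rw [ZMod.card, Fintype.card_coe, Int.card_Icc]
      omega

end Couplings

theorem Zf_eq_partitionFunction (α γ ε : ℝ) (m : ℕ) (h : ℤ → ℝ) :
    Zf α γ ε m h
      = partitionFunction ((↑) : ({-1, 1} : Finset ℝ) → ℝ) (of fun j k : Site m => Kc α γ ε m j k)
          fun j => h j := by
  have hshift (a b c d : ℝ) : a - b - c + d = (a - c) - (b - d) := by ring
  simp only [Zf, partitionFunction, energy, of_apply, Pi.sub_apply, Function.comp_apply, hshift,
    neg_mul]

theorem gaussian_domination_general {S : Type*} [Fintype S] (v : S → ℝ) {α γ ε : ℝ} (hα : 1 < α)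
    (hε : 0 ≤ ε) (hγε : ε ≤ γ) (m : ℕ) [NeZero m] (h : Site m → ℝ) :
    partitionFunction v (of fun j k : Site m => Kc α γ ε m j k) h
      ≤ partitionFunction v (of fun j k : Site m => Kc α γ ε m j k) 0 := by
  let F : ZMod (2 * m) → ℝ :=
    (γ - ε) • nearestNeighbor (2 * m) + ε • periodizedPower α (2 * m)
  have hF : IsReflectionPositive F :=
    ((isReflectionPositive_nearestNeighbor m).const_smul (sub_nonneg.2 hγε)).add
      ((isReflectionPositive_periodizedPower hα m).const_smul hε)
  have hK : (of fun j k : Site m => Kc α γ ε m j k)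
      = (circulant F).submatrix (siteEquiv m) (siteEquiv m) := by
    ext j k
    simp [Kc, Nc_eq_nearestNeighbor, Jc_eq_periodizedPower, F, siteEquiv]
  simp only [hK, partitionFunction_submatrix_equiv]
  exact hF.partitionFunction_le v _

/-- Gaussian domination `Z(h) ≤ Z(0)` for the periodized Dyson-Ising
ferromagnet with nearest-neighbor coupling `γ−ε ≥ 0` and power-law coupling
`ε·J`, `1 < α < 2`. -/
theorem gaussian_domination (α γ ε : ℝ) (hα1 : 1 < α) (hα2 : α < 2)
    (hε : 0 < ε) (hγε : ε ≤ γ) (m : ℕ) (hm : 1 ≤ m) (h : ℤ → ℝ) :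
    Zf α γ ε m h ≤ Zf α γ ε m (fun _ => 0) := by
  have : NeZero m := ⟨by omega⟩
  simp only [Zf_eq_partitionFunction]
  exact gaussian_domination_general _ hα1 hε.le hγε m _
end

section
/- Fix 1 < α < 2 and ε > 0. Then there exists γ₀ ≥ ε (depending on ε and α) such that for every γ > γ₀ there exists δ > 0 with the following property: for every integer m ≥ 1, letting Λ = {1−m, …, m} ⊆ ℤ (a periodic lattice of 2m sites, indices taken mod 2m), J_{j,k} = ∑_{n∈ℤ} |j − k + 2mn|^{−α} for j ≢ k (mod 2m) with J_{j,j} = 0, N_{j,k} = 1 if j − k ≡ ±1 (mod 2m) and 0 otherwise, K_{j,k} = (γ−ε)·N_{j,k} + ε·J_{j,k}, H(σ) = (1/2)·∑_{j,k∈Λ} K_{j,k}·(σ_j − σ_k)² for σ ∈ {−1,1}^Λ, and ⟨f⟩ = (∑_σ f(σ)e^{−H(σ)})/(∑_σ e^{−H(σ)}), one has (1/(2m)²)·∑_{j,k∈Λ} ⟨σ_jσ_k⟩ ≥ δ. -/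
/-- The Hamiltonian `H(σ) = (1/2)·∑_{j,k∈Λ} K_{j,k}(σ_j − σ_k)²`. -/
noncomputable def Hc (α γ ε : ℝ) (m : ℕ) (σ : Spin m) : ℝ :=
  (1 / 2) * ∑ j : Site m, ∑ k : Site m,
    Kc α γ ε m (j : ℤ) (k : ℤ) * ((σ j : ℝ) - (σ k : ℝ)) ^ 2

/-- The Gibbs two-point function
`⟨σ_j σ_k⟩ = (∑_σ σ_j σ_k e^{−H(σ)})/(∑_σ e^{−H(σ)})`. -/
noncomputable def corr (α γ ε : ℝ) (m : ℕ) (j k : Site m) : ℝ :=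
  (∑ σ : Spin m, (σ j : ℝ) * (σ k : ℝ) * Real.exp (-Hc α γ ε m σ)) /
    ∑ σ : Spin m, Real.exp (-Hc α γ ε m σ)

/-- `g_m(p) = (1/(2m))·∑_{j,k∈Λ} cos(p(j−k))·⟨σ_jσ_k⟩`. -/
noncomputable def gm (α γ ε : ℝ) (m : ℕ) (p : ℝ) : ℝ :=
  (1 / (2 * (m : ℝ))) * ∑ j : Site m, ∑ k : Site m,
    Real.cos (p * (((j : ℤ) - (k : ℤ) : ℤ) : ℝ)) * corr α γ ε m j k

/-- `E(p) = (1/2)·∑_{j∈Λ} K_{j,0}·(1 − cos(pj))`. -/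
noncomputable def Ep (α γ ε : ℝ) (m : ℕ) (p : ℝ) : ℝ :=
  (1 / 2) * ∑ j : Site m, Kc α γ ε m (j : ℤ) 0 * (1 - Real.cos (p * ((j : ℤ) : ℝ)))

/-!
Cut the circle `ℤ / 2m` at two antipodal bonds. In distances from the cut, the couplings between the
two halves form a Hankel matrix, and for the power law it is positive semidefinite because
`(a + b) ^ (-α)` is a Laplace transform in `a + b`. Schur products make the exponentiated couplings
positive semidefinite as well, so Cauchy-Schwarz gives `Z(h)² ≤ Z(h₊) Z(h₋)` for the two
symmetrizations `h₊`, `h₋` of the field `h` about the cut.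

Gaussian domination `Z(h) ≤ Z(0)` follows by contraction: each symmetrization removes from the
nearest-neighbour energy of `h` the bond that is cut, so averaging over all cuts turns a bound
`log (Z(h) / Z(0)) ≤ M * energy h` into the same bound with `M * (1 - 1 / (2m))` in place of `M`.

The second-order term in `h` is the infrared bound, with the dispersion relation of the couplings in
the denominator. By Plancherel all modes together carry the full mass of the spins, so the zero mode
is macroscopic as soon as the other modes carry at most half of it. The dispersion at momentum
`π u` is at least a constant times `(γ - ε) u² + ε u ^ (α - 1)`. As `α - 1 < α / 2 < 1`, for large
`γ` it exceeds `u ^ s / (1 - s)` with `s = α / 2`, and `∑ (1 - s) (k / m) ^ (-s) ≤ m` bounds the sum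
over the modes `u = k / m`.
-/

namespace DysonIsing

open Finset Matrix

section PositiveKernels

variable {n ι : Type*} [Fintype n] [Fintype ι]

lemma dotProduct_mulVec_eq_sum (A : Matrix n n ℝ) (x y : n → ℝ) :
    x ⬝ᵥ A *ᵥ y = ∑ i, ∑ j, x i * y j * A i j := by
  simp only [dotProduct, mulVec, mul_sum]
  exact sum_congr rfl fun i _ => sum_congr rfl fun j _ => by ring

lemma dotProduct_mulVec_comm {A : Matrix n n ℝ} (hA : A.IsSymm) (x y : n → ℝ) :
    x ⬝ᵥ A *ᵥ y = y ⬝ᵥ A *ᵥ x := by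
  rw [← dotProduct_transpose_mulVec, hA]

lemma posSemidef_iff_sum {A : Matrix n n ℝ} (hA : A.IsSymm) :
    A.PosSemidef ↔ ∀ x : n → ℝ, 0 ≤ ∑ i, ∑ j, x i * x j * A i j := by
  have hherm : A.IsHermitian := (conjTranspose_eq_transpose_of_trivial A).trans hA
  simp only [posSemidef_iff_dotProduct_mulVec, star_trivial, dotProduct_mulVec_eq_sum, hherm,
    true_and]

lemma posSemidef_of_hasSum {n κ : Type*} [Finite n] {A : κ → Matrix n n ℝ} {B : Matrix n n ℝ}
    (hA : ∀ t, (A t).PosSemidef) (hsum : ∀ i j, HasSum (fun t => A t i j) (B i j)) :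
    B.PosSemidef := by
  cases nonempty_fintype n
  have hsymm : B.IsSymm := IsSymm.ext fun i j =>
    (hsum j i).unique ((hsum i j).congr_fun fun t => (hA t).isHermitian.apply i j)
  refine (posSemidef_iff_sum hsymm).2 fun x => ?_
  have hform : HasSum (fun t => ∑ i, ∑ j, x i * x j * A t i j) (∑ i, ∑ j, x i * x j * B i j) :=
    hasSum_sum fun i _ => hasSum_sum fun j _ => (hsum i j).mul_left _
  exact hform.nonneg fun t => (posSemidef_iff_sum (hA t).isHermitian).1 (hA t) x

lemma posSemidef_map_pow {n : Type*} [Finite n] {A : Matrix n n ℝ} (hA : A.PosSemidef)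
    (k : ℕ) : (A.map (· ^ k)).PosSemidef := by
  induction k with
  | zero =>
    have hones : A.map (· ^ 0) = vecMulVec 1 (star 1) := by ext; simp [vecMulVec]
    exact hones ▸ posSemidef_vecMulVec_self_star _
  | succ k ih =>
    have hsucc : A.map (· ^ (k + 1)) = A.map (· ^ k) ⊙ A := by ext; simp [_root_.pow_succ]
    exact hsucc ▸ ih.hadamard hA

lemma posSemidef_map_exp {n : Type*} [Finite n] {A : Matrix n n ℝ} (hA : A.PosSemidef) :
    (A.map Real.exp).PosSemidef := by
  refine posSemidef_of_hasSum
    (fun k : ℕ => (posSemidef_map_pow hA k).smul (by positivity : (0 : ℝ) ≤ (k.factorial : ℝ)⁻¹))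
    fun i j => ?_
  simp only [Matrix.smul_apply, map_apply, smul_eq_mul, inv_mul_eq_div, Real.exp_eq_exp_ℝ]
  exact NormedSpace.expSeries_div_hasSum_exp (A i j)

lemma sq_dotProduct_mulVec_le {A : Matrix n n ℝ} (hA : A.PosSemidef) (x y : n → ℝ) :
    (x ⬝ᵥ A *ᵥ y) ^ 2 ≤ (x ⬝ᵥ A *ᵥ x) * (y ⬝ᵥ A *ᵥ y) := by
  classical
  have hsymm : LinearMap.IsSymm (toBilin' A) := ⟨fun u v => by
    rw [RingHom.id_apply, toBilin'_apply', toBilin'_apply',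
      dotProduct_mulVec_comm (A := A) hA.isHermitian]⟩
  have hnonneg (u : n → ℝ) : 0 ≤ toBilin' A u u := by
    simpa only [toBilin'_apply', star_trivial] using hA.dotProduct_mulVec_nonneg u
  simpa only [toBilin'_apply'] using
    LinearMap.BilinForm.apply_sq_le_of_symm (toBilin' A) hnonneg hsymm x y

lemma sq_sum_mul_exp_dotProduct_mulVec_le {M : Matrix n n ℝ} (hM : M.PosSemidef)
    (a b : ι → ℝ) (x y : ι → n → ℝ) :
    (∑ s, ∑ t, a s * b t * Real.exp (x s ⬝ᵥ M *ᵥ y t)) ^ 2 ≤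
      (∑ s, ∑ t, a s * a t * Real.exp (x s ⬝ᵥ M *ᵥ x t)) *
        ∑ s, ∑ t, b s * b t * Real.exp (y s ⬝ᵥ M *ᵥ y t) := by
  let z : ι ⊕ ι → n → ℝ := Sum.elim x y
  have hform (u v : ι ⊕ ι → ℝ) : u ⬝ᵥ ((of z * M * (of z)ᴴ).map Real.exp) *ᵥ v =
      ∑ s, ∑ t, u s * v t * Real.exp (z s ⬝ᵥ M *ᵥ z t) := by
    have hgram (s t) : (of z * M * (of z)ᴴ) s t = z s ⬝ᵥ M *ᵥ z t := by
      rw [dotProduct_mulVec]; rfl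
    simp only [dotProduct_mulVec_eq_sum _ u v, map_apply, hgram]
  have hcs := sq_dotProduct_mulVec_le (posSemidef_map_exp (hM.mul_mul_conjTranspose_same (of z)))
    (Sum.elim a 0) (Sum.elim 0 b)
  simp only [hform] at hcs
  simpa [Fintype.sum_sum_type, z] using hcs

end PositiveKernels

section ReflectionPositivity

variable {V P : Type*} [Fintype V] [Fintype P]

/-- The Dirichlet form `½ ∑ K_{jk} (φ_j - φ_k) (ψ_j - ψ_k)` of the couplings `K`. -/
noncomputable def dirichletForm (K : Matrix V V ℝ) (φ ψ : V → ℝ) : ℝ :=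
  1 / 2 * ∑ j, ∑ k, K j k * ((φ j - φ k) * (ψ j - ψ k))

/-- The Dirichlet energy `½ ∑ K_{jk} (φ_j - φ_k)²`; it is the Hamiltonian when `φ` is a spin
configuration. -/
noncomputable def energy (K : Matrix V V ℝ) (φ : V → ℝ) : ℝ :=
  1 / 2 * ∑ j, ∑ k, K j k * (φ j - φ k) ^ 2

lemma energy_comp_equiv {W : Type*} [Fintype W] (e : W ≃ V) (K : Matrix V V ℝ) (φ : V → ℝ) :
    energy (K.submatrix e e) (φ ∘ e) = energy K φ := by
  simp only [energy, submatrix_apply, Function.comp_apply]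
  rw [← e.sum_comp]
  simp_rw [← e.sum_comp fun k => K _ k * (φ _ - φ k) ^ 2]

lemma energy_fromBlocks_sumElim (A : Matrix P P ℝ) {M : Matrix P P ℝ} (hM : M.IsSymm)
    (x y : P → ℝ) :
    energy (fromBlocks A M M A) (Sum.elim x y) =
      (energy A x + ∑ i, ∑ j, M i j * x i ^ 2) + (energy A y + ∑ i, ∑ j, M i j * y i ^ 2) -
        (2 : ℝ) * (x ⬝ᵥ M *ᵥ y) := by
  have hdiag (w : P → ℝ) : ∑ i, ∑ j, M i j * w j ^ 2 = ∑ i, ∑ j, M i j * w i ^ 2 := by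
    rw [sum_comm]
    simp_rw [hM.apply]
  have hcross (z w : P → ℝ) : ∑ i, ∑ j, M i j * (z i - w j) ^ 2 =
      ∑ i, ∑ j, M i j * z i ^ 2 + ∑ i, ∑ j, M i j * w i ^ 2 - 2 * (z ⬝ᵥ M *ᵥ w) := by
    simp only [← hdiag w, dotProduct_mulVec_eq_sum, mul_sum, ← sum_add_distrib, ← sum_sub_distrib]
    exact sum_congr rfl fun i _ => sum_congr rfl fun j _ => by ring
  simp only [energy, Fintype.sum_sum_type, fromBlocks_apply₁₁, fromBlocks_apply₁₂,
    fromBlocks_apply₂₁, fromBlocks_apply₂₂, Sum.elim_inl, Sum.elim_inr, sum_add_distrib, hcross,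
    dotProduct_mulVec_comm hM y x]
  ring

/-- The field that agrees with `h` on the first half of `V` and is symmetric under the exchange of
the two halves numbered by `e`. -/
def symmetrizeLeft (e : P ⊕ P ≃ V) (h : V → ℝ) : V → ℝ :=
  Sum.elim (h ∘ e ∘ Sum.inl) (h ∘ e ∘ Sum.inl) ∘ e.symm

/-- The field that agrees with `h` on the second half of `V` and is symmetric under the exchange of
the two halves numbered by `e`. -/
def symmetrizeRight (e : P ⊕ P ≃ V) (h : V → ℝ) : V → ℝ :=
  Sum.elim (h ∘ e ∘ Sum.inr) (h ∘ e ∘ Sum.inr) ∘ e.symm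

lemma energy_symmetrizeLeft_add_symmetrizeRight {e : P ⊕ P ≃ V} {K : Matrix V V ℝ}
    {A M : Matrix P P ℝ} (hK : K.submatrix e e = fromBlocks A M M A) (hM : M.IsSymm) (h : V → ℝ) :
    energy K (symmetrizeLeft e h) + energy K (symmetrizeRight e h) = 2 * energy K h -
      2 * ((h ∘ e ∘ Sum.inl - h ∘ e ∘ Sum.inr) ⬝ᵥ M *ᵥ (h ∘ e ∘ Sum.inl - h ∘ e ∘ Sum.inr)) := by
  have hsplit : h ∘ e = Sum.elim (h ∘ e ∘ Sum.inl) (h ∘ e ∘ Sum.inr) :=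
    (Sum.elim_comp_inl_inr _).symm
  simp only [← energy_comp_equiv e K, hK, hsplit, symmetrizeLeft, symmetrizeRight,
    Function.comp_assoc, Equiv.symm_comp_self, Function.comp_id, energy_fromBlocks_sumElim A hM,
    mulVec_sub, sub_dotProduct, dotProduct_sub,
    dotProduct_mulVec_comm hM (h ∘ e ∘ Sum.inr) (h ∘ e ∘ Sum.inl)]
  ring

variable [DecidableEq V] (S : Finset ℝ)

/-- The partition function of `S`-valued spins in the external field `h`, which enters through the
shift `σ ↦ σ - h` of the Dirichlet form. -/
noncomputable def partitionFunction (K : Matrix V V ℝ) (h : V → ℝ) : ℝ :=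
  ∑ σ : V → S, Real.exp (-energy K fun j => σ j - h j)

lemma partitionFunction_comp_equiv {W : Type*} [Fintype W] [DecidableEq W] (e : W ≃ V)
    (K : Matrix V V ℝ) (h : V → ℝ) :
    partitionFunction S (K.submatrix e e) (h ∘ e) = partitionFunction S K h := by
  refine (Fintype.sum_equiv (e.arrowCongr (Equiv.refl S)).symm _ _ fun σ => ?_).symm
  rw [← energy_comp_equiv e]
  rfl

theorem sq_partitionFunction_fromBlocks_le [DecidableEq P] (A : Matrix P P ℝ) {M : Matrix P P ℝ}
    (hM : M.PosSemidef) (f g : P → ℝ) :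
    partitionFunction S (fromBlocks A M M A) (Sum.elim f g) ^ 2 ≤
      partitionFunction S (fromBlocks A M M A) (Sum.elim f f) *
        partitionFunction S (fromBlocks A M M A) (Sum.elim g g) := by
  let shift (h : P → ℝ) (σ : P → S) (i : P) : ℝ := σ i - h i
  let weight (φ : P → ℝ) : ℝ := Real.exp (-(energy A φ + ∑ i, ∑ j, M i j * φ i ^ 2))
  have hMsymm : M.IsSymm := hM.isHermitian
  have hZ (f g : P → ℝ) : partitionFunction S (fromBlocks A M M A) (Sum.elim f g) =
      ∑ σ, ∑ τ, weight (shift f σ) * weight (shift g τ) *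
        Real.exp (shift f σ ⬝ᵥ ((2 : ℝ) • M) *ᵥ shift g τ) := by
    rw [← Fintype.sum_prod_type']
    refine (Fintype.sum_equiv (Equiv.sumArrowEquivProdArrow P P S).symm _ _ fun (σ, τ) => ?_).symm
    have hsplit : (fun j => ((Equiv.sumArrowEquivProdArrow P P S).symm (σ, τ) j : ℝ) -
        Sum.elim f g j) = Sum.elim (shift f σ) (shift g τ) := by
      ext (i | i) <;> rfl
    rw [hsplit, energy_fromBlocks_sumElim A hMsymm, ← Real.exp_add, ← Real.exp_add, smul_mulVec,
      dotProduct_smul, smul_eq_mul]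
    ring_nf
  rw [hZ, hZ, hZ]
  exact sq_sum_mul_exp_dotProduct_mulVec_le (hM.smul zero_le_two) _ _ _ _

theorem sq_partitionFunction_le_of_reflection {P : Type*} [Finite P] {e : P ⊕ P ≃ V}
    {K : Matrix V V ℝ} {A M : Matrix P P ℝ} (hK : K.submatrix e e = fromBlocks A M M A)
    (hM : M.PosSemidef) (h : V → ℝ) :
    partitionFunction S K h ^ 2 ≤
      partitionFunction S K (symmetrizeLeft e h) *
        partitionFunction S K (symmetrizeRight e h) := by
  classical
  cases nonempty_fintype P
  have hsplit : h ∘ e = Sum.elim (h ∘ e ∘ Sum.inl) (h ∘ e ∘ Sum.inr) :=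
    (Sum.elim_comp_inl_inr _).symm
  simp only [← partitionFunction_comp_equiv S e K, hK, hsplit, symmetrizeLeft, symmetrizeRight,
    Function.comp_assoc, Equiv.symm_comp_self, Function.comp_id]
  exact sq_partitionFunction_fromBlocks_le S A hM _ _

end ReflectionPositivity

section CoshRepresentation

variable {V : Type*} [Fintype V]

lemma energy_sub (K : Matrix V V ℝ) (φ ψ : V → ℝ) :
    energy K (φ - ψ) = energy K φ + energy K ψ - 2 * dirichletForm K φ ψ := by
  simp only [energy, dirichletForm, mul_sum, ← sum_add_distrib, ← sum_sub_distrib, Pi.sub_apply]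
  exact sum_congr rfl fun j _ => sum_congr rfl fun k _ => by ring

lemma energy_neg (K : Matrix V V ℝ) (φ : V → ℝ) : energy K (-φ) = energy K φ := by
  simp only [energy, Pi.neg_apply, neg_sub_neg, sub_sq_comm]

lemma energy_smul (K : Matrix V V ℝ) (c : ℝ) (φ : V → ℝ) :
    energy K (c • φ) = c ^ 2 * energy K φ := by
  simp only [energy, Pi.smul_apply, smul_eq_mul, ← mul_sub, mul_pow, mul_left_comm _ (c ^ 2),
    ← mul_sum]

lemma dirichletForm_neg_left (K : Matrix V V ℝ) (φ ψ : V → ℝ) :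
    dirichletForm K (-φ) ψ = -dirichletForm K φ ψ := by
  simp only [dirichletForm, Pi.neg_apply, ← neg_sub', neg_mul, mul_neg, sum_neg_distrib]

lemma dirichletForm_smul_right (K : Matrix V V ℝ) (c : ℝ) (φ ψ : V → ℝ) :
    dirichletForm K φ (c • ψ) = c * dirichletForm K φ ψ := by
  simp only [dirichletForm, Pi.smul_apply, smul_eq_mul, ← mul_sub, mul_left_comm _ c, ← mul_sum]

lemma dirichletForm_self (K : Matrix V V ℝ) (φ : V → ℝ) : dirichletForm K φ φ = energy K φ := by
  simp only [dirichletForm, energy, sq]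

lemma dirichletForm_eq_mul_dotProduct {K : Matrix V V ℝ} (hK : K.IsSymm) {h : V → ℝ} {l : ℝ}
    (heig : ∀ j, ∑ k, K j k * (h j - h k) = l * h j) (φ : V → ℝ) :
    dirichletForm K φ h = l * (φ ⬝ᵥ h) := by
  have hleft : ∑ j, ∑ k, K j k * (φ j * (h j - h k)) = l * (φ ⬝ᵥ h) := by
    rw [dotProduct, mul_sum]
    refine sum_congr rfl fun j _ => ?_
    rw [mul_left_comm, ← heig, mul_sum]
    exact sum_congr rfl fun k _ => mul_left_comm _ _ _
  have hright : ∑ j, ∑ k, K j k * (φ k * (h j - h k)) = -(l * (φ ⬝ᵥ h)) := by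
    rw [sum_comm, ← hleft, ← sum_neg_distrib]
    refine sum_congr rfl fun j _ => ?_
    rw [← sum_neg_distrib]
    exact sum_congr rfl fun k _ => by rw [hK.apply]; ring
  rw [dirichletForm]
  simp only [sub_mul (φ _), mul_sub (K _ _), sum_sub_distrib, hleft, hright]
  ring

lemma energy_nonneg {K : Matrix V V ℝ} (hK : ∀ j k, 0 ≤ K j k) (φ : V → ℝ) : 0 ≤ energy K φ :=
  mul_nonneg (by norm_num) <| sum_nonneg fun j _ => sum_nonneg fun k _ =>
    mul_nonneg (hK j k) (sq_nonneg _)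

lemma dirichletForm_sq_le {K : Matrix V V ℝ} (hK : ∀ j k, 0 ≤ K j k) (φ ψ : V → ℝ) :
    dirichletForm K φ ψ ^ 2 ≤ energy K φ * energy K ψ := by
  have hterm (χ : V → ℝ) (p : V × V) : 0 ≤ K p.1 p.2 * (χ p.1 - χ p.2) ^ 2 :=
    mul_nonneg (hK _ _) (sq_nonneg _)
  have hcs := sum_sq_le_sum_mul_sum_of_sq_le_mul (univ ×ˢ univ)
    (r := fun p : V × V => K p.1 p.2 * ((φ p.1 - φ p.2) * (ψ p.1 - ψ p.2)))
    (fun p _ => hterm φ p) (fun p _ => hterm ψ p) fun p _ => (by ring : _ = _).le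
  simp only [sum_product] at hcs
  rw [energy, energy, dirichletForm]
  linarith

variable [DecidableEq V] {S : Finset ℝ}

lemma sum_comp_neg_spin (hS : ∀ s ∈ S, -s ∈ S) (F : (V → ℝ) → ℝ) :
    ∑ σ : V → S, F (-fun j => (σ j : ℝ)) = ∑ σ : V → S, F fun j => σ j :=
  let flip : S ≃ S := (Equiv.neg ℝ).subtypeEquiv fun s => ⟨hS s, fun h => neg_neg s ▸ hS _ h⟩
  ((Equiv.refl V).arrowCongr flip).sum_comp fun σ => F fun j => σ j

lemma partitionFunction_eq_sum_cosh (hS : ∀ s ∈ S, -s ∈ S) (K : Matrix V V ℝ) (h : V → ℝ) :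
    partitionFunction S K h = Real.exp (-energy K h) *
      ∑ σ : V → S, Real.exp (-energy K fun j => σ j) *
        Real.cosh (2 * dirichletForm K (fun j => σ j) h) := by
  let weight (φ : V → ℝ) : ℝ := Real.exp (-energy K φ) * Real.exp (2 * dirichletForm K φ h)
  have hexp : partitionFunction S K h =
      Real.exp (-energy K h) * ∑ σ : V → S, weight fun j => σ j := by
    rw [partitionFunction, mul_sum]
    refine sum_congr rfl fun σ _ => ?_
    simp only [weight, ← Real.exp_add]
    congr 1
    linear_combination -energy_sub K (fun j => (σ j : ℝ)) h
  have hcosh (φ : V → ℝ) : Real.exp (-energy K φ) * Real.cosh (2 * dirichletForm K φ h) =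
      (weight φ + weight (-φ)) / 2 := by
    simp only [weight, energy_neg, dirichletForm_neg_left, Real.cosh_eq, mul_neg]
    ring
  simp only [hexp, hcosh, ← sum_div, sum_add_distrib, sum_comp_neg_spin hS, add_self_div_two]

lemma partitionFunction_zero (K : Matrix V V ℝ) :
    partitionFunction S K 0 = ∑ σ : V → S, Real.exp (-energy K fun j => σ j) := by
  simp [partitionFunction]

lemma partitionFunction_pos (hS : S.Nonempty) (K : Matrix V V ℝ) (h : V → ℝ) :
    0 < partitionFunction S K h :=
  have := hS.to_subtype
  sum_pos (fun _ _ => Real.exp_pos _) univ_nonempty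

lemma partitionFunction_le_exp_mul (hS : ∀ s ∈ S, -s ∈ S) {K : Matrix V V ℝ}
    (hK : ∀ j k, 0 ≤ K j k) (h : V → ℝ) :
    partitionFunction S K h ≤
      Real.exp (2 * (∑ τ : V → S, energy K fun j => τ j) * energy K h) *
        partitionFunction S K 0 := by
  rw [partitionFunction_eq_sum_cosh hS, partitionFunction_zero]
  refine (mul_le_of_le_one_left (sum_nonneg fun σ _ => by positivity) ?_).trans ?_
  · simpa using energy_nonneg hK h
  rw [mul_sum]
  refine sum_le_sum fun σ _ => ?_
  rw [mul_comm]
  gcongr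
  refine (Real.cosh_le_exp_half_sq _).trans (Real.exp_le_exp.2 ?_)
  have hσ : energy K (fun j => (σ j : ℝ)) ≤ ∑ τ : V → S, energy K fun j => τ j :=
    single_le_sum (f := fun τ : V → S => energy K fun j => τ j)
      (fun τ _ => energy_nonneg hK _) (mem_univ σ)
  linarith [dirichletForm_sq_le hK (fun j => (σ j : ℝ)) h,
    mul_le_mul_of_nonneg_right hσ (energy_nonneg hK h)]

end CoshRepresentation

section GaussianDomination

lemma nonpos_of_forall_le_mul_contraction {ι : Type*} {L D : ι → ℝ} {q C : ℝ} (hq₀ : 0 ≤ q)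
    (hq₁ : q < 1) (hC : 0 ≤ C) (hbound : ∀ i, L i ≤ C * D i)
    (hstep : ∀ M : ℝ, 0 ≤ M → (∀ i, L i ≤ M * D i) → ∀ i, L i ≤ M * q * D i) (i : ι) :
    L i ≤ 0 := by
  have hiter (n : ℕ) : ∀ i, L i ≤ C * q ^ n * D i := by
    induction n with
    | zero => simpa using hbound
    | succ n ih =>
      simpa only [pow_succ, mul_assoc] using hstep _ (by positivity) ih
  have hlim : Filter.Tendsto (fun n : ℕ => C * q ^ n * D i) Filter.atTop (nhds 0) := by
    simpa using ((tendsto_pow_atTop_nhds_zero_of_lt_one hq₀ hq₁).const_mul C).mul_const (D i)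
  exact ge_of_tendsto' hlim fun n => hiter n i

variable {m : ℕ}

/-- The block of a translation invariant coupling `κ` joining two halves of the circle of `2m`
sites, both numbered from the same cut: the `i`-th and the `k`-th site are `i + k + 1` apart. -/
def hankel (κ : ZMod (2 * m) → ℝ) : Matrix (Fin m) (Fin m) ℝ :=
  of fun i k => κ ((i : ℕ) + (k : ℕ) + 1)

lemma isSymm_hankel (κ : ZMod (2 * m) → ℝ) : (hankel κ).IsSymm :=
  IsSymm.ext fun i k => by simp only [hankel, of_apply, add_comm]

/-- The nearest-neighbour coupling on the circle of `2m` sites. -/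
def nearestNeighbor (m : ℕ) (x : ZMod (2 * m)) : ℝ :=
  if x = 1 ∨ x = -1 then 1 else 0

lemma nearestNeighbor_neg (x : ZMod (2 * m)) : nearestNeighbor m (-x) = nearestNeighbor m x := by
  simp only [nearestNeighbor, neg_eq_iff_eq_neg, neg_neg, or_comm]

lemma nearestNeighbor_nonneg (x : ZMod (2 * m)) : 0 ≤ nearestNeighbor m x := by
  unfold nearestNeighbor; positivity

lemma hankel_nearestNeighbor : hankel (nearestNeighbor m) =
    diagonal fun i : Fin m => if (i : ℕ) = 0 ∨ (i : ℕ) + 1 = m then 1 else 0 := by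
  ext i k
  have h₁ : ((i : ℕ) + (k : ℕ) + 1 : ZMod (2 * m)) = 1 ↔ (i : ℕ) = 0 ∧ (k : ℕ) = 0 := by
    rw [add_eq_right]
    norm_cast
    rw [ZMod.natCast_eq_zero_iff, Nat.dvd_iff_mod_eq_zero, Nat.mod_eq_of_lt (by lia)]
    lia
  have h₂ : ((i : ℕ) + (k : ℕ) + 1 : ZMod (2 * m)) = -1 ↔ (i : ℕ) + 1 = m ∧ (k : ℕ) + 1 = m := by
    rw [eq_neg_iff_add_eq_zero]
    norm_cast
    rw [ZMod.natCast_eq_zero_iff]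
    refine ⟨fun h => ?_, fun ⟨_, _⟩ => ⟨1, by lia⟩⟩
    have := Nat.eq_of_dvd_of_lt_two_mul (by lia) h (by lia)
    lia
  simp only [hankel, nearestNeighbor, of_apply, h₁, h₂, diagonal_apply, Fin.ext_iff]
  grind

variable [NeZero m]

lemma bijective_reflection (r : ZMod (2 * m)) : Function.Bijective
    (Sum.elim (fun i : Fin m => r + 1 + (i : ℕ)) fun i : Fin m => r - (i : ℕ)) := by
  refine (Fintype.bijective_iff_injective_and_card _).2 ⟨?_, by simp [two_mul]⟩
  have hcast {a b : ℕ} (ha : a < m) (hb : b < m) (hab : (a : ZMod (2 * m)) = b) : a = b := by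
    rw [ZMod.natCast_eq_natCast_iff', Nat.mod_eq_of_lt (by lia), Nat.mod_eq_of_lt (by lia)] at hab
    exact hab
  have hne (i k : Fin m) : r + 1 + (i : ℕ) ≠ r - (k : ℕ) := fun h => by
    have hdvd : 2 * m ∣ i + k + 1 := by
      rw [← ZMod.natCast_eq_zero_iff]; push_cast; linear_combination h
    have := Nat.le_of_dvd (by lia) hdvd
    lia
  rintro (i | i) (k | k) h
  · exact congrArg Sum.inl (Fin.ext (hcast i.2 k.2 (by simpa using h)))
  · exact (hne i k h).elim
  · exact (hne k i h.symm).elim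
  · exact congrArg Sum.inr (Fin.ext (hcast i.2 k.2 (by simpa using h)))

/-- The reflection in the midpoint of the bond `{r, r + 1}`, recorded as the numbering of the two
halves of the circle that it exchanges: `inl i` is `r + 1 + i` and `inr i` is `r - i`. -/
noncomputable def reflection (r : ZMod (2 * m)) : Fin m ⊕ Fin m ≃ ZMod (2 * m) :=
  Equiv.ofBijective _ (bijective_reflection r)

lemma circulant_submatrix_reflection {κ : ZMod (2 * m) → ℝ} (hκ : ∀ x, κ (-x) = κ x)
    (r : ZMod (2 * m)) : ∃ A : Matrix (Fin m) (Fin m) ℝ,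
    (circulant κ).submatrix (reflection r) (reflection r) =
      fromBlocks A (hankel κ) (hankel κ) A := by
  refine ⟨of fun i k => κ ((i : ℕ) - (k : ℕ)), ?_⟩
  ext (i | i) (k | k) <;> simp only [reflection, hankel, submatrix_apply, circulant_apply,
    Equiv.ofBijective_apply, Sum.elim_inl, Sum.elim_inr, fromBlocks_apply₁₁, fromBlocks_apply₁₂,
    fromBlocks_apply₂₁, fromBlocks_apply₂₂, of_apply]
  · ring_nf
  · ring_nf
  · rw [← hκ]; ring_nf
  · rw [← hκ]; ring_nf

lemma sq_sub_le_energy_sub_energy_symmetrize (r : ZMod (2 * m)) (h : ZMod (2 * m) → ℝ) :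
    2 * (h (r + 1) - h r) ^ 2 ≤ 2 * energy (circulant (nearestNeighbor m)) h -
      (energy (circulant (nearestNeighbor m)) (symmetrizeLeft (reflection r) h) +
        energy (circulant (nearestNeighbor m)) (symmetrizeRight (reflection r) h)) := by
  obtain ⟨A, hA⟩ := circulant_submatrix_reflection (nearestNeighbor_neg (m := m)) r
  rw [energy_symmetrizeLeft_add_symmetrizeRight hA (isSymm_hankel _), hankel_nearestNeighbor]
  set x := h ∘ reflection r ∘ Sum.inl - h ∘ reflection r ∘ Sum.inr
  have hx : x ⟨0, Nat.pos_of_neZero m⟩ = h (r + 1) - h r := by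
    simp [x, reflection]
  have hcut : x ⟨0, Nat.pos_of_neZero m⟩ ^ 2 ≤
      ∑ i : Fin m, x i * ((if (i : ℕ) = 0 ∨ (i : ℕ) + 1 = m then 1 else 0) * x i) := by
    refine (le_of_eq ?_).trans (single_le_sum (fun i _ => ?_) (mem_univ ⟨0, Nat.pos_of_neZero m⟩))
    · simp [sq]
    · split_ifs <;> simp [mul_self_nonneg]
  simp only [dotProduct, mulVec_diagonal, ← hx]
  linarith

/-- The total squared increment of a field around the circle. -/
def gradEnergy (h : ZMod (2 * m) → ℝ) : ℝ := ∑ r, (h (r + 1) - h r) ^ 2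

lemma gradEnergy_eq_sum_ite (h : ZMod (2 * m) → ℝ) :
    gradEnergy h = ∑ j, ∑ k, if j - k = 1 then (h j - h k) ^ 2 else 0 := by
  rw [sum_comm, gradEnergy]
  simp only [sub_eq_iff_eq_add', sum_ite_eq', mem_univ, if_true]

lemma energy_nearestNeighbor_le_gradEnergy (h : ZMod (2 * m) → ℝ) :
    energy (circulant (nearestNeighbor m)) h ≤ gradEnergy h := by
  have hflip : gradEnergy h = ∑ j, ∑ k, if k - j = 1 then (h k - h j) ^ 2 else 0 := by
    rw [gradEnergy_eq_sum_ite, sum_comm]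
  have hbond (j k : ZMod (2 * m)) : nearestNeighbor m (j - k) * (h j - h k) ^ 2 ≤
      (if j - k = 1 then (h j - h k) ^ 2 else 0) + if k - j = 1 then (h k - h j) ^ 2 else 0 := by
    have hneg : j - k = -1 ↔ k - j = 1 := by rw [← neg_sub, neg_inj]
    have hsq := sq_nonneg (h j - h k)
    rw [sub_sq_comm (h k)]
    by_cases h₁ : j - k = 1 <;> by_cases h₂ : k - j = 1 <;>
      simp [nearestNeighbor, hneg, h₁, h₂, hsq]
  have hsum : ∑ j, ∑ k, nearestNeighbor m (j - k) * (h j - h k) ^ 2 ≤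
      gradEnergy h + gradEnergy h := by
    nth_rw 2 [hflip]
    rw [gradEnergy_eq_sum_ite, ← sum_add_distrib]
    simp only [← sum_add_distrib]
    exact sum_le_sum fun j _ => sum_le_sum fun k _ => hbond j k
  simp only [energy, circulant_apply]
  linarith

lemma gradEnergy_le_two_mul_energy_nearestNeighbor (h : ZMod (2 * m) → ℝ) :
    gradEnergy h ≤ 2 * energy (circulant (nearestNeighbor m)) h := by
  simp only [energy, circulant_apply, gradEnergy_eq_sum_ite, one_div, mul_inv_cancel_left₀,
    ne_eq, OfNat.ofNat_ne_zero, not_false_eq_true]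
  refine sum_le_sum fun j _ => sum_le_sum fun k _ => ?_
  rw [nearestNeighbor]
  split_ifs <;> simp_all [sq_nonneg]

lemma sq_sub_le_gradEnergy (h : ZMod (2 * m) → ℝ) (j k : ZMod (2 * m)) :
    (h j - h k) ^ 2 ≤ (2 * m) ^ 2 * gradEnergy h := by
  have hbond (r : ZMod (2 * m)) : |h (r + 1) - h r| ≤ √(gradEnergy h) :=
    Real.abs_le_sqrt <| single_le_sum (f := fun r => (h (r + 1) - h r) ^ 2)
      (fun r _ => sq_nonneg _) (mem_univ r)
  have hpath (n : ℕ) : |h (k + n) - h k| ≤ n * √(gradEnergy h) := by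
    induction n with
    | zero => simp
    | succ n ih =>
      have := abs_sub_le (h (k + n + 1)) (h (k + n)) (h k)
      have := hbond (k + n)
      push_cast
      rw [← add_assoc]
      linarith
  have hjk := hpath (j - k).val
  rw [ZMod.natCast_val, ZMod.cast_id, add_sub_cancel] at hjk
  have hval : ((j - k).val : ℝ) ≤ 2 * m := mod_cast (ZMod.val_lt (j - k)).le
  have hgrad : 0 ≤ gradEnergy h := sum_nonneg fun r _ => sq_nonneg _
  rw [← Real.sq_sqrt hgrad, ← mul_pow, ← sq_abs (h j - h k)]
  gcongr
  exact hjk.trans (by gcongr)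

lemma energy_circulant_le_mul_energy_nearestNeighbor {κ : ZMod (2 * m) → ℝ} (hκ : ∀ x, 0 ≤ κ x)
    (h : ZMod (2 * m) → ℝ) :
    energy (circulant κ) h ≤ (∑ j, ∑ k, circulant κ j k) * (2 * m) ^ 2 *
      energy (circulant (nearestNeighbor m)) h := by
  have hsum : ∑ j, ∑ k, circulant κ j k * (h j - h k) ^ 2 ≤
      ∑ j, ∑ k, circulant κ j k * ((2 * m) ^ 2 * gradEnergy h) :=
    sum_le_sum fun j _ => sum_le_sum fun k _ =>
      mul_le_mul_of_nonneg_left (sq_sub_le_gradEnergy h j k) (hκ _)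
  simp only [← sum_mul] at hsum
  have hκsum : 0 ≤ (∑ j, ∑ k, circulant κ j k) * (2 * (m : ℝ)) ^ 2 :=
    mul_nonneg (sum_nonneg fun j _ => sum_nonneg fun k _ => hκ _) (by positivity)
  have hgrad := mul_le_mul_of_nonneg_left (gradEnergy_le_two_mul_energy_nearestNeighbor h) hκsum
  rw [energy]
  linarith

/-- The relative gain `log (Z h / Z 0)` of the partition function in the external field `h`. -/
noncomputable def logPartitionGain {V : Type*} [Fintype V] [DecidableEq V] (S : Finset ℝ)
    (K : Matrix V V ℝ) (h : V → ℝ) : ℝ :=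
  Real.log (partitionFunction S K h / partitionFunction S K 0)

variable {S : Finset ℝ} {κ : ZMod (2 * m) → ℝ}

lemma logPartitionGain_le_mul_energy (hS : S.Nonempty) (hneg : ∀ s ∈ S, -s ∈ S)
    (hκ : ∀ x, 0 ≤ κ x) (h : ZMod (2 * m) → ℝ) :
    logPartitionGain S (circulant κ) h ≤
      2 * (∑ τ : ZMod (2 * m) → S, energy (circulant κ) fun j => τ j) *
        energy (circulant κ) h := by
  have hpos := partitionFunction_pos hS (circulant κ)
  rw [logPartitionGain, Real.log_le_iff_le_exp (div_pos (hpos h) (hpos 0)), div_le_iff₀ (hpos 0)]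
  exact partitionFunction_le_exp_mul hneg (K := circulant κ) (fun j k => hκ _) h

lemma two_mul_logPartitionGain_le (hS : S.Nonempty) (hκ : ∀ x, κ (-x) = κ x)
    (hpsd : (hankel κ).PosSemidef) (r : ZMod (2 * m)) (h : ZMod (2 * m) → ℝ) :
    2 * logPartitionGain S (circulant κ) h ≤
      logPartitionGain S (circulant κ) (symmetrizeLeft (reflection r) h) +
        logPartitionGain S (circulant κ) (symmetrizeRight (reflection r) h) := by
  obtain ⟨A, hA⟩ := circulant_submatrix_reflection hκ r
  have hpos (φ) : 0 < partitionFunction S (circulant κ) φ / partitionFunction S (circulant κ) 0 :=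
    div_pos (partitionFunction_pos hS _ _) (partitionFunction_pos hS _ _)
  simp only [logPartitionGain]
  rw [← Real.log_mul (hpos _).ne' (hpos _).ne', ← Nat.cast_two, ← Real.log_pow]
  refine Real.log_le_log (pow_pos (hpos h) 2) ?_
  rw [div_pow, div_mul_div_comm, ← sq]
  gcongr
  exact sq_partitionFunction_le_of_reflection S hA hpsd h

-- Averaging over the cuts gains a factor, since each reflection removes the energy of its cut.
lemma logPartitionGain_le_mul_contraction (hS : S.Nonempty) (hκ : ∀ x, κ (-x) = κ x)
    (hpsd : (hankel κ).PosSemidef) {M : ℝ} (hM : 0 ≤ M)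
    (hbound : ∀ φ, logPartitionGain S (circulant κ) φ ≤
      M * energy (circulant (nearestNeighbor m)) φ) (h : ZMod (2 * m) → ℝ) :
    logPartitionGain S (circulant κ) h ≤
      M * (1 - 1 / (2 * m)) * energy (circulant (nearestNeighbor m)) h := by
  have hcut (r : ZMod (2 * m)) : logPartitionGain S (circulant κ) h ≤
      M * (energy (circulant (nearestNeighbor m)) h - (h (r + 1) - h r) ^ 2) := by
    have hgain := two_mul_logPartitionGain_le hS hκ hpsd r h
    have henergy := mul_le_mul_of_nonneg_left (sq_sub_le_energy_sub_energy_symmetrize r h) hM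
    linarith [hbound (symmetrizeLeft (reflection r) h), hbound (symmetrizeRight (reflection r) h)]
  have hsum := sum_le_sum fun r (_ : r ∈ univ) => hcut r
  rw [← mul_sum, sum_sub_distrib, ← gradEnergy] at hsum
  simp only [sum_const, card_univ, ZMod.card, nsmul_eq_mul, Nat.cast_mul, Nat.cast_ofNat] at hsum
  have hgrad := mul_le_mul_of_nonneg_left (energy_nearestNeighbor_le_gradEnergy h) hM
  have hm : (0 : ℝ) < m := mod_cast NeZero.pos m
  refine le_of_mul_le_mul_left ?_ (by positivity : (0 : ℝ) < 2 * m)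
  calc _ ≤ M * (2 * m * energy (circulant (nearestNeighbor m)) h -
        energy (circulant (nearestNeighbor m)) h) := by linarith
    _ = _ := by field

theorem partitionFunction_circulant_le (hS : S.Nonempty) (hneg : ∀ s ∈ S, -s ∈ S)
    (hκ : ∀ x, κ (-x) = κ x) (hκ₀ : ∀ x, 0 ≤ κ x) (hpsd : (hankel κ).PosSemidef)
    (h : ZMod (2 * m) → ℝ) :
    partitionFunction S (circulant κ) h ≤ partitionFunction S (circulant κ) 0 := by
  have hpos := partitionFunction_pos hS (circulant κ)
  suffices hgain : logPartitionGain S (circulant κ) h ≤ 0 by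
    rwa [logPartitionGain, Real.log_nonpos_iff (div_pos (hpos h) (hpos 0)).le,
      div_le_one (hpos 0)] at hgain
  let E : ℝ := 2 * ∑ τ : ZMod (2 * m) → S, energy (circulant κ) fun j => τ j
  have hE : 0 ≤ E := mul_nonneg zero_le_two <| sum_nonneg fun τ _ =>
    energy_nonneg (K := circulant κ) (fun j k => hκ₀ _) _
  have hκsum : 0 ≤ ∑ j, ∑ k, circulant κ j k := sum_nonneg fun j _ => sum_nonneg fun k _ => hκ₀ _
  have hm : (1 : ℝ) ≤ m := mod_cast Nat.one_le_iff_ne_zero.2 (NeZero.ne m)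
  have hq : 1 / (2 * m : ℝ) ≤ 1 := by rw [div_le_one (by positivity)]; linarith
  refine nonpos_of_forall_le_mul_contraction (sub_nonneg.2 hq) (sub_lt_self _ (by positivity))
    (by positivity : 0 ≤ E * ((∑ j, ∑ k, circulant κ j k) * (2 * m) ^ 2)) (fun φ => ?_)
    (fun M => logPartitionGain_le_mul_contraction hS hκ hpsd) h
  rw [mul_assoc]
  exact (logPartitionGain_le_mul_energy hS hneg hκ₀ φ).trans <|
    mul_le_mul_of_nonneg_left (energy_circulant_le_mul_energy_nearestNeighbor hκ₀ φ) hE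

end GaussianDomination

section InfraredBound

lemma one_add_sq_half_le_cosh (x : ℝ) : 1 + x ^ 2 / 2 ≤ Real.cosh x := by
  have hcosh : Real.cosh x = 1 + 2 * Real.sinh (x / 2) ^ 2 := by
    rw [← mul_div_cancel₀ x two_ne_zero, Real.cosh_two_mul, Real.cosh_sq,
      mul_div_cancel_left₀ _ two_ne_zero]
    ring
  have hsinh : |x / 2| ≤ |Real.sinh (x / 2)| := by
    rw [Real.abs_sinh]
    exact Real.self_le_sinh_iff.2 (abs_nonneg _)
  rw [hcosh]
  linarith [sq_le_sq.2 hsinh]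

lemma sum_mul_sq_le_of_sum_mul_cosh_le {ι : Type*} [Fintype ι] {w X : ι → ℝ} {B : ℝ}
    (hw : ∀ i, 0 ≤ w i)
    (hcosh : ∀ s : ℝ, ∑ i, w i * Real.cosh (s * X i) ≤ Real.exp (s ^ 2 / 2 * B) * ∑ i, w i) :
    ∑ i, w i * X i ^ 2 ≤ B * ∑ i, w i := by
  have hderiv : HasDerivAt (fun t => Real.exp (t * B) * ∑ i, w i) (B * ∑ i, w i) 0 := by
    simpa using (((hasDerivAt_id (0 : ℝ)).mul_const B).exp).mul_const (∑ i, w i)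
  refine ge_of_tendsto hderiv.tendsto_slope_zero_right ?_
  filter_upwards [self_mem_nhdsWithin] with t ht
  have hsqrt : √(2 * t) ^ 2 / 2 = t := by
    rw [Real.sq_sqrt (mul_nonneg zero_le_two (le_of_lt ht)), mul_div_cancel_left₀ _ two_ne_zero]
  have hexpand : ∑ i, w i + t * ∑ i, w i * X i ^ 2 ≤ Real.exp (t * B) * ∑ i, w i := by
    refine le_trans ?_ (hsqrt ▸ hcosh √(2 * t))
    rw [mul_sum, ← sum_add_distrib]
    refine sum_le_sum fun i _ => le_of_eq_of_le ?_
      (mul_le_mul_of_nonneg_left (one_add_sq_half_le_cosh (√(2 * t) * X i)) (hw i))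
    linear_combination (-w i * X i ^ 2) * hsqrt
  rw [smul_eq_mul, zero_add, zero_mul, Real.exp_zero, one_mul, le_inv_mul_iff₀ ht]
  linarith

variable {V : Type*} [Fintype V] [DecidableEq V] (S : Finset ℝ)

/-- The expectation in the Gibbs measure `e^{-energy} / Z` on `S`-valued spin configurations. -/
noncomputable def gibbs (K : Matrix V V ℝ) : ((V → S) → ℝ) →ₗ[ℝ] ℝ :=
  (partitionFunction S K 0)⁻¹ • ∑ σ : V → S, Real.exp (-energy K fun j => σ j) • LinearMap.proj σ

lemma gibbs_apply (K : Matrix V V ℝ) (F : (V → S) → ℝ) :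
    gibbs S K F = (∑ σ, Real.exp (-energy K fun j => σ j) * F σ) / partitionFunction S K 0 := by
  simp [gibbs, LinearMap.sum_apply, div_eq_inv_mul]

lemma gibbs_const {S : Finset ℝ} (hS : S.Nonempty) (K : Matrix V V ℝ) (c : ℝ) :
    gibbs S K (fun _ => c) = c := by
  rw [gibbs_apply, ← sum_mul, ← partitionFunction_zero,
    mul_div_cancel_left₀ _ (partitionFunction_pos hS K 0).ne']

variable {S} {K : Matrix V V ℝ}

lemma gibbs_sq_dirichletForm_le (hS : S.Nonempty) (hneg : ∀ s ∈ S, -s ∈ S)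
    (hdom : ∀ h, partitionFunction S K h ≤ partitionFunction S K 0) (h : V → ℝ) :
    gibbs S K (fun σ => dirichletForm K (fun j => σ j) h ^ 2) ≤ energy K h / 2 := by
  have hmoment := sum_mul_sq_le_of_sum_mul_cosh_le (ι := V → S) (B := 2 * energy K h)
    (w := fun σ => Real.exp (-energy K fun j => σ j))
    (X := fun σ => 2 * dirichletForm K (fun j => σ j) h) (fun σ => (Real.exp_pos _).le) fun s => by
      have hs := hdom (s • h)
      rw [partitionFunction_eq_sum_cosh hneg, energy_smul, Real.exp_neg,
        inv_mul_le_iff₀ (Real.exp_pos _), partitionFunction_zero] at hs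
      simp only [dirichletForm_smul_right, mul_left_comm _ s] at hs
      exact hs.trans_eq (by ring_nf)
  rw [gibbs_apply, div_le_iff₀ (partitionFunction_pos hS K 0), partitionFunction_zero]
  simp only [mul_pow, mul_left_comm _ ((2 : ℝ) ^ 2), ← mul_sum] at hmoment
  linarith

lemma gibbs_sq_dotProduct_le (hS : S.Nonempty) (hneg : ∀ s ∈ S, -s ∈ S)
    (hdom : ∀ h, partitionFunction S K h ≤ partitionFunction S K 0) (hK : K.IsSymm) {h : V → ℝ}
    {l : ℝ} (hl : 0 < l) (heig : ∀ j, ∑ k, K j k * (h j - h k) = l * h j) :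
    gibbs S K (fun σ => ((fun j => (σ j : ℝ)) ⬝ᵥ h) ^ 2) ≤ (h ⬝ᵥ h) / (2 * l) := by
  have hbound := gibbs_sq_dirichletForm_le hS hneg hdom h
  rw [← dirichletForm_self] at hbound
  simp only [dirichletForm_eq_mul_dotProduct hK heig, mul_pow] at hbound
  have hsmul := (gibbs S K).map_smul (l ^ 2) fun σ => ((fun j => (σ j : ℝ)) ⬝ᵥ h) ^ 2
  simp only [Pi.smul_def, smul_eq_mul] at hsmul
  rw [hsmul] at hbound
  rw [le_div_iff₀ (by positivity)]
  exact le_of_mul_le_mul_left (by linarith) hl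

end InfraredBound

section SumRule

lemma isSymm_circulant {G : Type*} [AddCommGroup G] {κ : G → ℝ} (hκ : ∀ x, κ (-x) = κ x) :
    (circulant κ).IsSymm :=
  IsSymm.ext fun j k => by rw [circulant_apply, circulant_apply, ← hκ, neg_sub]

variable {G : Type*} [AddCommGroup G] [Fintype G]

/-- The dispersion relation of a translation invariant coupling `κ`: the energy per site of the
mode `ψ`. -/
noncomputable def dispersion (κ : G → ℝ) (ψ : AddChar G ℂ) : ℝ :=
  ∑ x, κ x * (1 - (ψ x).re)

lemma ofReal_dispersion {κ : G → ℝ} (hκ : ∀ x, κ (-x) = κ x) (ψ : AddChar G ℂ) :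
    (dispersion κ ψ : ℂ) = ∑ x, (κ x : ℂ) * (1 - ψ x) := by
  have hre : (∑ x, (κ x : ℂ) * (1 - ψ x)).re = dispersion κ ψ := by simp [dispersion]
  rw [← hre, ← Complex.conj_eq_iff_re, map_sum, ← Equiv.sum_comp (Equiv.neg G)]
  simp [hκ, AddChar.map_neg_eq_conj]

lemma sum_circulant_mul_sub_addChar {κ : G → ℝ} (hκ : ∀ x, κ (-x) = κ x) (ψ : AddChar G ℂ)
    (j : G) : ∑ k, ((circulant κ j k : ℝ) : ℂ) * (ψ j - ψ k) = dispersion κ ψ * ψ j := by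
  rw [ofReal_dispersion hκ, sum_mul, ← Equiv.sum_comp (Equiv.addRight j)]
  refine sum_congr rfl fun x _ => ?_
  rw [circulant_apply, Equiv.coe_addRight, sub_add_cancel_right, hκ, AddChar.map_add_eq_mul]
  ring

lemma sum_circulant_mul_sub_re {κ : G → ℝ} (hκ : ∀ x, κ (-x) = κ x) (ψ : AddChar G ℂ) (j : G) :
    ∑ k, circulant κ j k * ((ψ j).re - (ψ k).re) = dispersion κ ψ * (ψ j).re := by
  simpa using congrArg Complex.re (sum_circulant_mul_sub_addChar hκ ψ j)

lemma sum_circulant_mul_sub_im {κ : G → ℝ} (hκ : ∀ x, κ (-x) = κ x) (ψ : AddChar G ℂ) (j : G) :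
    ∑ k, circulant κ j k * ((ψ j).im - (ψ k).im) = dispersion κ ψ * (ψ j).im := by
  simpa using congrArg Complex.im (sum_circulant_mul_sub_addChar hκ ψ j)

lemma normSq_sum_mul_addChar (f : G → ℝ) (ψ : AddChar G ℂ) :
    Complex.normSq (∑ j, f j * ψ j) =
      (f ⬝ᵥ fun j => (ψ j).re) ^ 2 + (f ⬝ᵥ fun j => (ψ j).im) ^ 2 := by
  simp [Complex.normSq_apply, dotProduct, sq]

lemma sum_normSq_sum_mul_addChar (f : G → ℝ) :
    ∑ ψ : AddChar G ℂ, Complex.normSq (∑ j, f j * ψ j) = Fintype.card G * ∑ j, f j ^ 2 := by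
  classical
  have hexpand (ψ : AddChar G ℂ) : (Complex.normSq (∑ j, f j * ψ j) : ℂ) =
      ∑ j, ∑ k, (f j : ℂ) * f k * ψ (j - k) := by
    rw [← Complex.mul_conj, map_sum, sum_mul_sum]
    refine sum_congr rfl fun j _ => sum_congr rfl fun k _ => ?_
    rw [sub_eq_add_neg, AddChar.map_add_eq_mul, AddChar.map_neg_eq_conj, map_mul,
      Complex.conj_ofReal]
    ring
  apply Complex.ofReal_injective
  push_cast
  simp only [hexpand]
  rw [sum_comm, mul_sum]
  refine sum_congr rfl fun j _ => ?_
  rw [sum_comm]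
  simp only [← mul_sum, AddChar.sum_apply_eq_ite, sub_eq_zero, mul_ite, mul_zero, sum_ite_eq,
    mem_univ, if_true]
  ring

lemma re_dotProduct_add_im_dotProduct (ψ : AddChar G ℂ) :
    (fun j => (ψ j).re) ⬝ᵥ (fun j => (ψ j).re) + (fun j => (ψ j).im) ⬝ᵥ (fun j => (ψ j).im) =
      Fintype.card G := by
  simp only [dotProduct, ← sum_add_distrib, ← Complex.normSq_apply, Complex.normSq_eq_norm_sq,
    AddChar.norm_apply]
  simp

variable [DecidableEq G] {S : Finset ℝ} {κ : G → ℝ}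

theorem gibbs_normSq_sum_mul_addChar_le (hS : S.Nonempty) (hneg : ∀ s ∈ S, -s ∈ S)
    (hκ : ∀ x, κ (-x) = κ x)
    (hdom : ∀ h, partitionFunction S (circulant κ) h ≤ partitionFunction S (circulant κ) 0)
    {ψ : AddChar G ℂ} (hψ : 0 < dispersion κ ψ) :
    gibbs S (circulant κ) (fun σ => Complex.normSq (∑ j, (σ j : ℝ) * ψ j)) ≤
      Fintype.card G / (2 * dispersion κ ψ) := by
  have hre := gibbs_sq_dotProduct_le hS hneg hdom (isSymm_circulant hκ) hψ
    (sum_circulant_mul_sub_re hκ ψ)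
  have him := gibbs_sq_dotProduct_le hS hneg hdom (isSymm_circulant hκ) hψ
    (sum_circulant_mul_sub_im hκ ψ)
  rw [← re_dotProduct_add_im_dotProduct ψ, add_div]
  refine le_trans (le_of_eq ?_) (add_le_add hre him)
  rw [← map_add]
  simp only [normSq_sum_mul_addChar, Pi.add_def]

theorem card_mul_gibbs_sum_sq_le (hS : S.Nonempty) (hneg : ∀ s ∈ S, -s ∈ S)
    (hκ : ∀ x, κ (-x) = κ x)
    (hdom : ∀ h, partitionFunction S (circulant κ) h ≤ partitionFunction S (circulant κ) 0)
    (hpos : ∀ ψ ≠ 0, 0 < dispersion κ ψ) :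
    Fintype.card G * gibbs S (circulant κ) (fun σ => ∑ j, (σ j : ℝ) ^ 2) ≤
      gibbs S (circulant κ) (fun σ => (∑ j, (σ j : ℝ)) ^ 2) +
        ∑ ψ ∈ univ.erase 0, Fintype.card G / (2 * dispersion κ ψ) := by
  have hzero (σ : G → S) : Complex.normSq (∑ j, (σ j : ℝ) * (0 : AddChar G ℂ) j) =
      (∑ j, (σ j : ℝ)) ^ 2 := by
    simp only [AddChar.zero_apply, mul_one, ← Complex.ofReal_sum, Complex.normSq_ofReal, sq]
  have hplancherel := (gibbs S (circulant κ)).map_smul (Fintype.card G : ℝ)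
    fun σ => ∑ j, (σ j : ℝ) ^ 2
  simp only [Pi.smul_def, smul_eq_mul, ← sum_normSq_sum_mul_addChar] at hplancherel
  rw [← hplancherel, ← sum_fn, map_sum, ← add_sum_erase _ _ (mem_univ 0)]
  simp only [hzero]
  gcongr with ψ hψ
  exact gibbs_normSq_sum_mul_addChar_le hS hneg hκ hdom (hpos ψ (ne_of_mem_erase hψ))

end SumRule

section PowerLawKernel

variable {α : ℝ}

lemma integrableOn_rpow_mul_exp_neg_mul (hα : 0 < α) {r : ℝ} (hr : 0 < r) :
    MeasureTheory.IntegrableOn (fun t : ℝ => t ^ (α - 1) * Real.exp (-(r * t))) (Set.Ioi 0) := by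
  simpa only [Real.rpow_one, neg_mul] using
    integrableOn_rpow_mul_exp_neg_mul_rpow (p := 1) (s := α - 1) (b := r) (by linarith) one_pos hr

lemma integral_rpow_mul_exp_neg_mul (hα : 0 < α) {r : ℝ} (hr : 0 < r) :
    ∫ t in Set.Ioi (0 : ℝ), t ^ (α - 1) * Real.exp (-(r * t)) = Real.Gamma α * r ^ (-α) := by
  rw [Real.integral_rpow_mul_exp_neg_mul_Ioi hα hr, one_div, Real.inv_rpow hr.le,
    Real.rpow_neg hr.le, mul_comm]

-- `r ^ (-α)` is a superposition of the rank-one kernels `exp (-b i * t) * exp (-b k * t)`.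
lemma posSemidef_add_rpow_neg {ι : Type*} [Finite ι] (hα : 0 < α) {b : ι → ℝ}
    (hb : ∀ i, 0 < b i) : (of fun i k => (b i + b k) ^ (-α)).PosSemidef := by
  cases nonempty_fintype ι
  have hsquare (x : ι → ℝ) (t : ℝ) :
      ∑ i, ∑ k, x i * x k * (t ^ (α - 1) * Real.exp (-((b i + b k) * t))) =
        t ^ (α - 1) * (∑ i, x i * Real.exp (-(b i * t))) ^ 2 := by
    rw [sq, sum_mul_sum]
    simp only [mul_sum, add_mul, neg_add, Real.exp_add]
    exact sum_congr rfl fun i _ => sum_congr rfl fun k _ => by ring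
  refine (posSemidef_iff_sum (IsSymm.ext fun i k => by simp only [of_apply, add_comm])).2
    fun x => nonneg_of_mul_nonneg_right ?_ (Real.Gamma_pos_of_pos hα)
  have hint (i k : ι) := (integrableOn_rpow_mul_exp_neg_mul hα (add_pos (hb i) (hb k))).const_mul
    (x i * x k)
  calc (0 : ℝ) ≤ ∫ t in Set.Ioi (0 : ℝ), t ^ (α - 1) * (∑ i, x i * Real.exp (-(b i * t))) ^ 2 :=
        MeasureTheory.setIntegral_nonneg measurableSet_Ioi fun t ht =>
          mul_nonneg (Real.rpow_nonneg (le_of_lt ht) _) (sq_nonneg _)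
    _ = ∑ i, ∑ k, x i * x k * (Real.Gamma α * (b i + b k) ^ (-α)) := by
        simp only [← hsquare]
        rw [MeasureTheory.integral_finsetSum _ fun i _ =>
          MeasureTheory.integrable_finsetSum _ fun k _ => hint i k]
        refine sum_congr rfl fun i _ => ?_
        rw [MeasureTheory.integral_finsetSum _ fun k _ => hint i k]
        refine sum_congr rfl fun k _ => ?_
        rw [MeasureTheory.integral_const_mul,
          integral_rpow_mul_exp_neg_mul hα (add_pos (hb i) (hb k))]
    _ = Real.Gamma α * ∑ i, ∑ k, x i * x k * of (fun i k => (b i + b k) ^ (-α)) i k := by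
        simp only [of_apply, mul_sum, mul_left_comm]

end PowerLawKernel

section DysonCoupling

variable {α : ℝ} {m : ℕ}

/-- The periodized power-law coupling `Jc` as a function of the displacement on the circle. -/
noncomputable def powerCoupling (α : ℝ) (m : ℕ) (x : ZMod (2 * m)) : ℝ := Jc α m x.val 0

lemma two_mul_dvd_sub_iff (j k : ℤ) : (2 * m : ℤ) ∣ j - k ↔ (j : ZMod (2 * m)) = k := by
  rw [eq_comm, ZMod.intCast_eq_intCast_iff_dvd_sub, Nat.cast_mul, Nat.cast_two]

lemma Jc_congr {j k j' k' : ℤ} (h : (j - k : ZMod (2 * m)) = j' - k') :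
    Jc α m j k = Jc α m j' k' := by
  have hdvd : (2 * m : ℤ) ∣ j - k ↔ (2 * m : ℤ) ∣ j' - k' := by
    rw [two_mul_dvd_sub_iff, two_mul_dvd_sub_iff, ← sub_eq_zero, h, sub_eq_zero]
  obtain ⟨z, hz⟩ := (two_mul_dvd_sub_iff (m := m) (j - k) (j' - k')).2 (by push_cast; exact h)
  have hz' : (j - k - (j' - k') : ℝ) = 2 * m * z := mod_cast hz
  refine if_congr hdvd rfl ?_
  rw [← (Equiv.addRight z).tsum_eq fun n : ℤ => |(j' - k' + 2 * m * n : ℝ)| ^ (-α)]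
  refine tsum_congr fun n => congrArg (|·| ^ (-α)) ?_
  rw [Equiv.coe_addRight, Int.cast_add]
  linear_combination hz'

lemma Nc_eq_nearestNeighbor (j k : ℤ) : Nc m j k = nearestNeighbor m (j - k) := by
  have h₁ := two_mul_dvd_sub_iff (m := m) (j - k) 1
  have h₂ := two_mul_dvd_sub_iff (m := m) (j - k) (-1)
  push_cast [sub_neg_eq_add] at h₁ h₂
  simp only [Nc, nearestNeighbor, h₁, h₂]

lemma Jc_comm (j k : ℤ) : Jc α m j k = Jc α m k j := by
  refine if_congr dvd_sub_comm rfl ?_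
  rw [← (Equiv.neg ℤ).tsum_eq]
  refine tsum_congr fun n => congrArg (· ^ (-α)) ?_
  rw [← abs_neg, Equiv.neg_apply, Int.cast_neg]
  ring_nf

lemma Jc_nonneg (j k : ℤ) : 0 ≤ Jc α m j k := by
  unfold Jc
  split_ifs
  · exact le_rfl
  · exact tsum_nonneg fun n => Real.rpow_nonneg (abs_nonneg _) _

lemma powerCoupling_nonneg (x : ZMod (2 * m)) : 0 ≤ powerCoupling α m x := Jc_nonneg _ _

lemma forall_pos_or_forall_neg_add_half_add_mul (n : ℤ) :
    (∀ i : Fin m, 0 < (i + 1 / 2 + m * n : ℝ)) ∨ ∀ i : Fin m, (i + 1 / 2 + m * n : ℝ) < 0 := by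
  rcases le_or_gt 0 n with hn | hn
  · have : (0 : ℝ) ≤ n := mod_cast hn
    exact Or.inl fun i => by positivity
  · refine Or.inr fun i => ?_
    have hn' : (n : ℝ) ≤ -1 := mod_cast Int.le_sub_one_of_lt hn
    have hi : (i : ℝ) + 1 ≤ m := mod_cast i.2
    have := mul_le_mul_of_nonneg_left hn' (Nat.cast_nonneg (α := ℝ) m)
    linarith

/-- The total coupling `Kc` as a function of the displacement on the circle. -/
noncomputable def dysonCoupling (α γ ε : ℝ) (m : ℕ) (x : ZMod (2 * m)) : ℝ :=
  (γ - ε) * nearestNeighbor m x + ε * powerCoupling α m x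

variable {γ ε : ℝ}

lemma dysonCoupling_nonneg (hε : 0 ≤ ε) (hγ : ε ≤ γ) (x : ZMod (2 * m)) :
    0 ≤ dysonCoupling α γ ε m x :=
  add_nonneg (mul_nonneg (sub_nonneg.2 hγ) (nearestNeighbor_nonneg x))
    (mul_nonneg hε (powerCoupling_nonneg x))

variable [NeZero m]

lemma Jc_eq_powerCoupling (j k : ℤ) : Jc α m j k = powerCoupling α m (j - k) :=
  Jc_congr (by simp)

lemma powerCoupling_neg (x : ZMod (2 * m)) : powerCoupling α m (-x) = powerCoupling α m x := by
  have hneg := Jc_eq_powerCoupling (α := α) (m := m) 0 x.val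
  rw [Jc_comm] at hneg
  simpa [powerCoupling] using hneg.symm

lemma summable_abs_add_two_mul_rpow_neg (hα : 1 < α) (x : ℝ) :
    Summable fun n : ℤ => |x + 2 * m * n| ^ (-α) := by
  have hm : (0 : ℝ) < 2 * m := mul_pos two_pos (mod_cast NeZero.pos m)
  refine (((Real.summable_one_div_int_add_rpow (x / (2 * m)) α).2 hα).mul_left
    ((2 * m : ℝ) ^ (-α))).congr fun n => ?_
  have hscale : x + 2 * m * n = 2 * m * (n + x / (2 * m)) := by
    rw [mul_add, mul_div_cancel₀ _ hm.ne', add_comm]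
  rw [hscale, abs_mul, abs_of_pos hm, Real.mul_rpow hm.le (abs_nonneg _),
    Real.rpow_neg (abs_nonneg _), one_div]

lemma hasSum_powerCoupling (hα : 1 < α) {x : ℤ} (hx : (x : ZMod (2 * m)) ≠ 0) :
    HasSum (fun n : ℤ => |(x : ℝ) + 2 * m * n| ^ (-α)) (powerCoupling α m x) := by
  have hJ := Jc_eq_powerCoupling (α := α) (m := m) x 0
  rw [Jc, if_neg (by rwa [two_mul_dvd_sub_iff, Int.cast_zero])] at hJ
  simp only [Int.cast_zero, sub_zero] at hJ
  exact hJ ▸ (summable_abs_add_two_mul_rpow_neg hα x).hasSum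

-- The displacement between sites `i` and `k` across the cut is split at the cut into half-integer
-- distances, so that the kernel takes the form `(b i + b k) ^ (-α)`.
lemma posSemidef_hankel_powerCoupling (hα : 1 < α) : (hankel (powerCoupling α m)).PosSemidef := by
  have hne (i k : Fin m) : (((i + k + 1 : ℕ) : ℤ) : ZMod (2 * m)) ≠ 0 := by
    rw [Int.cast_natCast, Ne, ZMod.natCast_eq_zero_iff]
    exact fun h => absurd (Nat.le_of_dvd (by lia) h) (by lia)
  have hpos (n : ℤ) (i : Fin m) : 0 < |(i + 1 / 2 + m * n : ℝ)| :=
    abs_pos.2 <| (forall_pos_or_forall_neg_add_half_add_mul n).elim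
      (fun h => (h i).ne') fun h => (h i).ne
  have hsplit (n : ℤ) (i k : Fin m) : |(i + 1 / 2 + m * n : ℝ)| + |(k + 1 / 2 + m * n : ℝ)| =
      |(i + k + 1 + 2 * m * n : ℝ)| := by
    rw [← (abs_add_eq_add_abs_iff _ _).2 <| (forall_pos_or_forall_neg_add_half_add_mul n).imp
      (fun h => ⟨(h i).le, (h k).le⟩) fun h => ⟨(h i).le, (h k).le⟩]
    ring_nf
  refine posSemidef_of_hasSum
    (fun n : ℤ => posSemidef_add_rpow_neg (zero_lt_one.trans hα) (hpos n)) fun i k => ?_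
  have hsum := hasSum_powerCoupling hα (hne i k)
  push_cast at hsum
  simpa only [of_apply, hsplit, hankel] using hsum

lemma Kc_eq_dysonCoupling (j k : ℤ) : Kc α γ ε m j k = dysonCoupling α γ ε m (j - k) := by
  rw [Kc, dysonCoupling, Nc_eq_nearestNeighbor, Jc_eq_powerCoupling]

lemma dysonCoupling_neg (x : ZMod (2 * m)) :
    dysonCoupling α γ ε m (-x) = dysonCoupling α γ ε m x := by
  rw [dysonCoupling, dysonCoupling, nearestNeighbor_neg, powerCoupling_neg]

lemma posSemidef_hankel_dysonCoupling (hα : 1 < α) (hε : 0 ≤ ε) (hγ : ε ≤ γ) :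
    (hankel (dysonCoupling α γ ε m)).PosSemidef := by
  have hnn : (hankel (nearestNeighbor m)).PosSemidef := by
    rw [hankel_nearestNeighbor]
    exact PosSemidef.diagonal fun i => by dsimp only; split_ifs <;> norm_num
  exact (hnn.smul (sub_nonneg.2 hγ)).add ((posSemidef_hankel_powerCoupling hα).smul hε)

end DysonCoupling

section PowerSums

lemma exists_rpow_le_mul_sq_add_mul_rpow {s β B : ℝ} (hs : 0 ≤ s) (hβ : β < s) (hB : 0 < B) :
    ∃ A₀ : ℝ, 0 < A₀ ∧ ∀ A, A₀ ≤ A → ∀ u : ℝ, 0 < u → u ≤ 1 →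
      u ^ s ≤ A * u ^ 2 + B * u ^ β := by
  set v : ℝ := B ^ (s - β)⁻¹
  have : 0 < v := Real.rpow_pos_of_pos hB _
  refine ⟨(v ^ 2)⁻¹, by positivity, fun A hA u hu hu₁ => ?_⟩
  have hA₀ : 0 ≤ A := le_trans (by positivity) hA
  rcases le_total u v with huv | hvu
  · have hB' : u ^ (s - β) ≤ B := by
      rwa [← Real.le_rpow_inv_iff_of_pos hu.le hB.le (sub_pos.2 hβ)]
    calc u ^ s = u ^ (s - β) * u ^ β := by rw [← Real.rpow_add hu, sub_add_cancel]
      _ ≤ B * u ^ β := by gcongr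
      _ ≤ A * u ^ 2 + B * u ^ β := le_add_of_nonneg_left (by positivity)
  · calc u ^ s ≤ 1 := Real.rpow_le_one hu.le hu₁ hs
      _ = (v ^ 2)⁻¹ * v ^ 2 := (inv_mul_cancel₀ (by positivity)).symm
      _ ≤ A * u ^ 2 := by gcongr
      _ ≤ A * u ^ 2 + B * u ^ β := le_add_of_nonneg_right (by positivity)

lemma mul_rpow_neg_le_rpow_sub_rpow {s x : ℝ} (hs₀ : 0 ≤ s) (hs₁ : s ≤ 1) (hx : 0 ≤ x) :
    (1 - s) * (x + 1) ^ (-s) ≤ (x + 1) ^ (1 - s) - x ^ (1 - s) := by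
  have hx₁ : 0 < x + 1 := by positivity
  have hbernoulli := rpow_one_add_le_one_add_mul_self (s := -(1 / (x + 1))) (p := 1 - s)
    (by rw [neg_le_neg_iff, div_le_one hx₁]; linarith) (by linarith) (by linarith)
  have hratio : 1 + -(1 / (x + 1)) = x / (x + 1) := by field
  rw [hratio, Real.div_rpow hx hx₁.le, div_le_iff₀ (by positivity)] at hbernoulli
  have hsplit : (x + 1) ^ (1 - s) = (x + 1) * (x + 1) ^ (-s) := by
    rw [sub_eq_add_neg, Real.rpow_add hx₁, Real.rpow_one]
  have hexpand : (1 + (1 - s) * -(1 / (x + 1))) * (x + 1) ^ (1 - s) =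
      (x + 1) ^ (1 - s) - (1 - s) * (x + 1) ^ (-s) := by
    rw [hsplit]; field
  linarith

lemma sum_Icc_mul_rpow_neg_le {s : ℝ} (hs₀ : 0 ≤ s) (hs₁ : s < 1) (m : ℕ) :
    ∑ k ∈ Icc 1 m, (1 - s) * (k : ℝ) ^ (-s) ≤ (m : ℝ) ^ (1 - s) := by
  induction m with
  | zero => simp [Real.zero_rpow (sub_pos.2 hs₁).ne']
  | succ m ih =>
    have := mul_rpow_neg_le_rpow_sub_rpow hs₀ hs₁.le m.cast_nonneg
    rw [sum_Icc_succ_top (by lia)]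
    push_cast
    linarith

lemma sum_Icc_mul_div_rpow_neg_le {s : ℝ} (hs₀ : 0 ≤ s) (hs₁ : s < 1) (m : ℕ) :
    ∑ k ∈ Icc 1 m, (1 - s) * (k / m : ℝ) ^ (-s) ≤ m := by
  rcases m.eq_zero_or_pos with rfl | hm
  · simp
  have hm' : (0 : ℝ) < m := mod_cast hm
  calc ∑ k ∈ Icc 1 m, (1 - s) * (k / m : ℝ) ^ (-s)
      = (m : ℝ) ^ s * ∑ k ∈ Icc 1 m, (1 - s) * (k : ℝ) ^ (-s) := by
        rw [mul_sum]
        refine sum_congr rfl fun k _ => ?_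
        rw [Real.div_rpow k.cast_nonneg hm'.le, Real.rpow_neg hm'.le, div_inv_eq_mul]
        ring
    _ ≤ (m : ℝ) ^ s * (m : ℝ) ^ (1 - s) := by gcongr; exact sum_Icc_mul_rpow_neg_le hs₀ hs₁ m
    _ = m := by rw [← Real.rpow_add hm', add_sub_cancel, Real.rpow_one]

lemma cube_div_three_le_sum_sq (n : ℕ) : (n : ℝ) ^ 3 / 3 ≤ ∑ x ∈ Icc 1 n, (x : ℝ) ^ 2 := by
  induction n with
  | zero => simp
  | succ n ih =>
    rw [sum_Icc_succ_top (by lia)]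
    push_cast
    linarith [(n.cast_nonneg : (0 : ℝ) ≤ n)]

lemma two_mul_sq_le_one_sub_cos {t : ℝ} (ht : |t| ≤ 1) :
    2 * t ^ 2 ≤ 1 - Real.cos (Real.pi * t) := by
  have hpi : |Real.pi * t| ≤ Real.pi := by
    rw [abs_mul, abs_of_pos Real.pi_pos]
    exact mul_le_of_le_one_right Real.pi_pos.le ht
  have hcos := Real.cos_le_one_sub_mul_cos_sq hpi
  have hscale : 2 / Real.pi ^ 2 * (Real.pi * t) ^ 2 = 2 * t ^ 2 := by
    field [Real.pi_ne_zero]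
  linarith

end PowerSums

section WaveNumber

variable {m : ℕ} [NeZero m]

/-- The `k ≤ m` for which the character `ψ` of the circle of `2m` sites has the momentum
`± π * k / m`. -/
noncomputable def waveNumber (ψ : AddChar (ZMod (2 * m)) ℂ) : ℕ :=
  (AddChar.zmodAddEquiv.symm ψ).valMinAbs.natAbs

lemma waveNumber_le (ψ : AddChar (ZMod (2 * m)) ℂ) : waveNumber ψ ≤ m :=
  (ZMod.natAbs_valMinAbs_le _).trans_eq (Nat.mul_div_cancel_left m two_pos)

lemma waveNumber_pos {ψ : AddChar (ZMod (2 * m)) ℂ} (hψ : ψ ≠ 0) : 0 < waveNumber ψ := by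
  simpa [waveNumber, Nat.pos_iff_ne_zero] using hψ

lemma waveNumber_eq_waveNumber_iff {ψ φ : AddChar (ZMod (2 * m)) ℂ} :
    waveNumber ψ = waveNumber φ ↔ ψ = φ ∨ ψ = -φ := by
  rw [waveNumber, waveNumber, ZMod.natAbs_valMinAbs_eq_natAbs_valMinAbs, ← map_neg,
    EmbeddingLike.apply_eq_iff_eq, EmbeddingLike.apply_eq_iff_eq]

lemma re_addChar_natCast (ψ : AddChar (ZMod (2 * m)) ℂ) (x : ℕ) :
    (ψ x).re = Real.cos (Real.pi * (waveNumber ψ / m * x)) := by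
  obtain ⟨l, rfl⟩ := AddChar.zmodAddEquiv.surjective ψ
  have hexp := AddChar.zmod_intCast (n := 2 * m) l.valMinAbs x
  rw [ZMod.coe_valMinAbs, Int.cast_natCast] at hexp
  have hre : (AddChar.zmodAddEquiv l x).re = Real.cos (Real.pi * (l.valMinAbs / m * x)) := by
    change ((AddChar.zmod (2 * m) l x : Circle) : ℂ).re = _
    rw [hexp, Circle.coe_exp, Complex.exp_ofReal_mul_I_re]
    push_cast
    congr 1
    field_simp
  rw [hre, ← Real.cos_abs, waveNumber, AddEquiv.symm_apply_apply, Nat.cast_natAbs, Int.cast_abs]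
  simp [abs_mul, abs_div, abs_of_pos Real.pi_pos]

lemma sum_erase_waveNumber_le {g : ℕ → ℝ} (hg : ∀ k, 0 ≤ g k) :
    ∑ ψ ∈ univ.erase (0 : AddChar (ZMod (2 * m)) ℂ), g (waveNumber ψ) ≤
      2 * ∑ k ∈ Icc 1 m, g k := by
  classical
  have hmaps : ∀ ψ ∈ univ.erase (0 : AddChar (ZMod (2 * m)) ℂ), waveNumber ψ ∈ Icc 1 m :=
    fun ψ hψ => mem_Icc.2 ⟨waveNumber_pos (ne_of_mem_erase hψ), waveNumber_le ψ⟩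
  rw [← sum_fiberwise_of_maps_to hmaps, mul_sum]
  refine sum_le_sum fun k _ => ?_
  have hcard : #{ψ ∈ univ.erase (0 : AddChar (ZMod (2 * m)) ℂ) | waveNumber ψ = k} ≤ 2 := by
    obtain h | ⟨φ, hφ⟩ :=
      {ψ ∈ univ.erase (0 : AddChar (ZMod (2 * m)) ℂ) | waveNumber ψ = k}.eq_empty_or_nonempty
    · simp only [h, card_empty, zero_le]
    · refine (card_le_card fun ψ hψ => ?_).trans (card_le_two (a := φ) (b := -φ))
      rw [mem_insert, mem_singleton, ← waveNumber_eq_waveNumber_iff, (mem_filter.1 hφ).2,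
        (mem_filter.1 hψ).2]
  rw [sum_congr rfl fun ψ hψ => congrArg g (mem_filter.1 hψ).2, sum_const, nsmul_eq_mul]
  exact mul_le_mul_of_nonneg_right (mod_cast hcard) (hg k)

end WaveNumber

section Dispersion

lemma dispersion_add_smul {G : Type*} [AddCommGroup G] [Fintype G] (a b : ℝ) (κ μ : G → ℝ)
    (ψ : AddChar G ℂ) :
    dispersion (fun x => a * κ x + b * μ x) ψ = a * dispersion κ ψ + b * dispersion μ ψ := by
  simp only [dispersion, mul_sum, ← sum_add_distrib]
  exact sum_congr rfl fun x _ => by ring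

variable {m : ℕ} [NeZero m]

lemma sum_mul_sq_le_dispersion {κ : ZMod (2 * m) → ℝ} (hκ : ∀ x, 0 ≤ κ x)
    (ψ : AddChar (ZMod (2 * m)) ℂ) {n : ℕ} (hnm : n ≤ m) (hn : waveNumber ψ / m * n ≤ (1 : ℝ)) :
    ∑ x ∈ Icc 1 n, κ x * (2 * (waveNumber ψ / m * x : ℝ) ^ 2) ≤ dispersion κ ψ := by
  have hinj : Set.InjOn (Nat.cast : ℕ → ZMod (2 * m)) (Icc 1 n) := fun x hx y hy hxy => by
    rw [coe_Icc, Set.mem_Icc] at hx hy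
    have hm := NeZero.pos m
    rwa [ZMod.natCast_eq_natCast_iff', Nat.mod_eq_of_lt (by lia), Nat.mod_eq_of_lt (by lia)] at hxy
  have hterm (x : ZMod (2 * m)) : 0 ≤ κ x * (1 - (ψ x).re) := mul_nonneg (hκ x) <|
    sub_nonneg.2 <| (Complex.re_le_norm _).trans (ψ.norm_apply x).le
  refine le_trans ?_ (sum_le_univ_sum_of_nonneg hterm (s := (Icc 1 n).image Nat.cast))
  rw [sum_image hinj]
  refine sum_le_sum fun x hx => mul_le_mul_of_nonneg_left ?_ (hκ x)
  rw [re_addChar_natCast]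
  refine two_mul_sq_le_one_sub_cos ?_
  rw [abs_of_nonneg (by positivity)]
  exact le_trans (by gcongr; exact (mem_Icc.1 hx).2) hn

lemma two_mul_sq_le_dispersion_nearestNeighbor (ψ : AddChar (ZMod (2 * m)) ℂ) :
    2 * (waveNumber ψ / m : ℝ) ^ 2 ≤ dispersion (nearestNeighbor m) ψ := by
  have hm : (0 : ℝ) < m := mod_cast NeZero.pos m
  have hk : (waveNumber ψ / m : ℝ) ≤ 1 := (div_le_one hm).2 (mod_cast waveNumber_le ψ)
  simpa [nearestNeighbor] using sum_mul_sq_le_dispersion nearestNeighbor_nonneg ψ (n := 1)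
    (NeZero.pos m) (by simpa using hk)

lemma rpow_neg_le_powerCoupling {α : ℝ} (hα : 1 < α) {x : ℕ} (hx : x ∈ Icc 1 m) :
    (x : ℝ) ^ (-α) ≤ powerCoupling α m x := by
  rw [mem_Icc] at hx
  have hne : ((x : ℤ) : ZMod (2 * m)) ≠ 0 := by
    rw [Int.cast_natCast, Ne, ZMod.natCast_eq_zero_iff]
    exact fun h => absurd (Nat.le_of_dvd (by lia) h) (by lia)
  simpa using le_hasSum (hasSum_powerCoupling hα hne) 0
    fun n _ => Real.rpow_nonneg (abs_nonneg _) _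

lemma one_le_two_mul_mul_floor_inv {u : ℝ} (hu : 0 < u) (hu₁ : u ≤ 1) :
    1 ≤ 2 * (u * ⌊u⁻¹⌋₊) := by
  have hfloor : (1 : ℝ) ≤ ⌊u⁻¹⌋₊ :=
    mod_cast (Nat.one_le_floor_iff _).2 ((one_le_inv₀ hu).2 hu₁)
  have := (inv_lt_iff_one_lt_mul₀' hu).1 (Nat.lt_floor_add_one u⁻¹)
  linarith [mul_le_mul_of_nonneg_left hfloor hu.le]

lemma rpow_le_dispersion_powerCoupling {α : ℝ} (hα : 1 < α) {ψ : AddChar (ZMod (2 * m)) ℂ}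
    (hψ : ψ ≠ 0) : (waveNumber ψ / m : ℝ) ^ (α - 1) / 12 ≤ dispersion (powerCoupling α m) ψ := by
  have hm : (0 : ℝ) < m := mod_cast NeZero.pos m
  have hk : (0 : ℝ) < waveNumber ψ := mod_cast waveNumber_pos hψ
  set u : ℝ := waveNumber ψ / m with hu_def
  have hu : 0 < u := by positivity
  have hu₁ : u ≤ 1 := (div_le_one hm).2 (mod_cast waveNumber_le ψ)
  -- Only displacements up to `1 / u`, on which the phases stay in `[0, π]`, are kept.
  set n := ⌊u⁻¹⌋₊
  have hnu : u * n ≤ 1 :=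
    (mul_le_mul_of_nonneg_left (Nat.floor_le (inv_nonneg.2 hu.le)) hu.le).trans_eq
      (mul_inv_cancel₀ hu.ne')
  have hnm : n ≤ m := Nat.floor_le_of_le <| by
    rw [hu_def, inv_div]
    exact div_le_self hm.le (mod_cast waveNumber_pos hψ)
  have hpow (x : ℕ) (hx : x ∈ Icc 1 n) : u ^ α ≤ powerCoupling α m x := by
    rw [mem_Icc] at hx
    have hx₀ : (0 : ℝ) < x := mod_cast hx.1
    refine le_trans ?_ (rpow_neg_le_powerCoupling hα (mem_Icc.2 ⟨hx.1, hx.2.trans hnm⟩))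
    rw [Real.rpow_neg hx₀.le, ← Real.inv_rpow hx₀.le]
    gcongr
    rw [le_inv_comm₀ hu hx₀]
    exact (Nat.le_floor_iff (inv_nonneg.2 hu.le)).1 hx.2
  calc u ^ (α - 1) / 12 ≤ (2 * (u * n)) ^ 3 * (u ^ (α - 1) / 12) :=
        le_mul_of_one_le_left (by positivity) (one_le_pow₀ (one_le_two_mul_mul_floor_inv hu hu₁))
    _ = 2 * u ^ 2 * u ^ α * (n ^ 3 / 3) := by rw [Real.rpow_sub_one hu.ne']; field
    _ ≤ 2 * u ^ 2 * u ^ α * ∑ x ∈ Icc 1 n, (x : ℝ) ^ 2 := by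
        gcongr; exact cube_div_three_le_sum_sq n
    _ = ∑ x ∈ Icc 1 n, u ^ α * (2 * (u * x) ^ 2) := by
        rw [mul_sum]; exact sum_congr rfl fun x _ => by ring
    _ ≤ ∑ x ∈ Icc 1 n, powerCoupling α m x * (2 * (u * x) ^ 2) := by
        gcongr with x hx
        exact hpow x hx
    _ ≤ dispersion (powerCoupling α m) ψ :=
        sum_mul_sq_le_dispersion powerCoupling_nonneg ψ hnm hnu

lemma le_dispersion_dysonCoupling {α γ ε : ℝ} (hα : 1 < α) (hε : 0 ≤ ε) (hγ : ε ≤ γ)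
    {ψ : AddChar (ZMod (2 * m)) ℂ} (hψ : ψ ≠ 0) :
    2 * (γ - ε) * (waveNumber ψ / m : ℝ) ^ 2 + ε / 12 * (waveNumber ψ / m : ℝ) ^ (α - 1) ≤
      dispersion (dysonCoupling α γ ε m) ψ := by
  have hnn := mul_le_mul_of_nonneg_left (two_mul_sq_le_dispersion_nearestNeighbor ψ)
    (sub_nonneg.2 hγ)
  have hpower := mul_le_mul_of_nonneg_left (rpow_le_dispersion_powerCoupling hα hψ) hε
  unfold dysonCoupling
  rw [dispersion_add_smul]
  linarith

end Dispersion

section LongRangeOrder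

variable {m : ℕ} [NeZero m]

lemma sum_card_div_two_mul_dispersion_le {κ : ZMod (2 * m) → ℝ} {s : ℝ} (hs₀ : 0 ≤ s) (hs₁ : s < 1)
    (hdisp : ∀ ψ ≠ 0, (waveNumber ψ / m : ℝ) ^ s ≤ (1 - s) * dispersion κ ψ) :
    ∑ ψ ∈ univ.erase 0, (Fintype.card (ZMod (2 * m)) : ℝ) / (2 * dispersion κ ψ) ≤
      2 * m ^ 2 := by
  have hm : (0 : ℝ) < m := mod_cast NeZero.pos m
  have hs : 0 < 1 - s := sub_pos.2 hs₁
  have hterm (ψ : AddChar (ZMod (2 * m)) ℂ) (hψ : ψ ∈ univ.erase 0) :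
      (Fintype.card (ZMod (2 * m)) : ℝ) / (2 * dispersion κ ψ) ≤
        m * ((1 - s) * (waveNumber ψ / m : ℝ) ^ (-s)) := by
    have hk : (0 : ℝ) < waveNumber ψ := mod_cast waveNumber_pos (ne_of_mem_erase hψ)
    have hu : 0 < (waveNumber ψ / m : ℝ) ^ s := by positivity
    have hle := hdisp ψ (ne_of_mem_erase hψ)
    rw [ZMod.card, Nat.cast_mul, Nat.cast_two, mul_div_mul_left _ _ two_ne_zero,
      Real.rpow_neg (by positivity), ← div_eq_mul_inv, div_eq_mul_inv (m : ℝ)]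
    gcongr
    rw [le_div_iff₀ hu, inv_mul_le_iff₀ (pos_of_mul_pos_right (hu.trans_le hle) hs.le), mul_comm]
    exact hle
  calc _ ≤ 2 * ∑ k ∈ Icc 1 m, m * ((1 - s) * (k / m : ℝ) ^ (-s)) :=
        (sum_le_sum hterm).trans <|
          sum_erase_waveNumber_le (g := fun k => m * ((1 - s) * (k / m : ℝ) ^ (-s)))
            fun k => by positivity
    _ = 2 * (m * ∑ k ∈ Icc 1 m, (1 - s) * (k / m : ℝ) ^ (-s)) := by simp only [mul_sum]
    _ ≤ 2 * (m * m) := by gcongr; exact sum_Icc_mul_div_rpow_neg_le hs₀ hs₁ m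
    _ = 2 * m ^ 2 := by rw [sq]

theorem two_mul_sq_le_gibbs_sum_sq {κ : ZMod (2 * m) → ℝ} (hκ : ∀ x, κ (-x) = κ x)
    (hκ₀ : ∀ x, 0 ≤ κ x) (hpsd : (hankel κ).PosSemidef) {s : ℝ} (hs₀ : 0 ≤ s) (hs₁ : s < 1)
    (hdisp : ∀ ψ ≠ 0, (waveNumber ψ / m : ℝ) ^ s ≤ (1 - s) * dispersion κ ψ) :
    2 * m ^ 2 ≤ gibbs {-1, 1} (circulant κ) (fun σ => (∑ j, (σ j : ℝ)) ^ 2) := by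
  have hm : (0 : ℝ) < m := mod_cast NeZero.pos m
  have hS : ({-1, 1} : Finset ℝ).Nonempty := insert_nonempty _ _
  have hneg : ∀ s ∈ ({-1, 1} : Finset ℝ), -s ∈ ({-1, 1} : Finset ℝ) := by simp
  have hpos (ψ : AddChar (ZMod (2 * m)) ℂ) (hψ : ψ ≠ 0) : 0 < dispersion κ ψ := by
    have hk : (0 : ℝ) < waveNumber ψ := mod_cast waveNumber_pos hψ
    exact pos_of_mul_pos_right (lt_of_lt_of_le (by positivity) (hdisp ψ hψ)) (sub_pos.2 hs₁).le
  have hspin (σ : ZMod (2 * m) → ({-1, 1} : Finset ℝ)) : ∑ j, (σ j : ℝ) ^ 2 = 2 * m := by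
    have hsq (j : ZMod (2 * m)) : (σ j : ℝ) ^ 2 = 1 := by
      rcases mem_insert.1 (σ j).2 with h | h
      · rw [h]; norm_num
      · rw [mem_singleton.1 h, one_pow]
    simp [hsq, ZMod.card]
  have hsum := card_mul_gibbs_sum_sq_le hS hneg hκ
    (partitionFunction_circulant_le hS hneg hκ hκ₀ hpsd) hpos
  simp only [hspin, gibbs_const hS, ZMod.card, Nat.cast_mul, Nat.cast_two] at hsum
  have herr := sum_card_div_two_mul_dispersion_le hs₀ hs₁ hdisp
  simp only [ZMod.card, Nat.cast_mul, Nat.cast_two] at herr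
  linarith

lemma bijective_intCast_site :
    Function.Bijective fun j : Site m => ((j : ℤ) : ZMod (2 * m)) := by
  rw [Fintype.bijective_iff_injective_and_card]
  refine ⟨fun j k hjk => Subtype.ext ?_, ?_⟩
  · have hj := mem_Icc.1 j.2
    have hk := mem_Icc.1 k.2
    refine sub_eq_zero.1 (Int.eq_zero_of_abs_lt_dvd ((two_mul_dvd_sub_iff _ _).2 hjk) ?_)
    rw [abs_lt]
    constructor <;> linarith
  · rw [ZMod.card, Fintype.card_coe, Int.card_Icc]
    lia

/-- The sites `{1−m, …, m}` as a fundamental domain for `ℤ / 2m`. -/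
noncomputable def siteEquiv (m : ℕ) [NeZero m] : Site m ≃ ZMod (2 * m) :=
  Equiv.ofBijective _ bijective_intCast_site

lemma exists_forall_rpow_le_dispersion_dysonCoupling {α ε : ℝ} (hα₁ : 1 < α) (hα₂ : α < 2)
    (hε : 0 < ε) : ∃ γ₀, ε ≤ γ₀ ∧ ∀ γ, γ₀ < γ → ∀ (m : ℕ) [NeZero m],
      ∀ ψ ≠ (0 : AddChar (ZMod (2 * m)) ℂ), (waveNumber ψ / m : ℝ) ^ (α / 2) ≤
        (1 - α / 2) * dispersion (dysonCoupling α γ ε m) ψ := by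
  have hα : 0 < 2 - α := sub_pos.2 hα₂
  obtain ⟨A₀, hA₀, hA⟩ := exists_rpow_le_mul_sq_add_mul_rpow (s := α / 2) (β := α - 1)
    (B := (1 - α / 2) * (ε / 12)) (by linarith) (by linarith) (mul_pos (by linarith) (by linarith))
  refine ⟨ε + A₀ / (2 - α), le_add_of_nonneg_right (by positivity), fun γ hγ m _ ψ hψ => ?_⟩
  have hm : (0 : ℝ) < m := mod_cast NeZero.pos m
  have hk : (0 : ℝ) < waveNumber ψ := mod_cast waveNumber_pos hψ
  have hγ₀ : A₀ ≤ (γ - ε) * (2 - α) := ((div_lt_iff₀ hα).1 (by linarith)).le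
  have hγ₁ : ε ≤ γ := by linarith [div_pos hA₀ hα]
  refine (hA _ hγ₀ _ (by positivity) ((div_le_one hm).2 (mod_cast waveNumber_le ψ))).trans ?_
  have hdisp := le_dispersion_dysonCoupling hα₁ hε.le hγ₁ hψ
  linarith [mul_le_mul_of_nonneg_left hdisp (show 0 ≤ 1 - α / 2 by linarith)]

variable (α γ ε : ℝ)

lemma Hc_comp_siteEquiv (σ : ZMod (2 * m) → ({-1, 1} : Finset ℝ)) :
    Hc α γ ε m (σ ∘ siteEquiv m) =
      energy (circulant (dysonCoupling α γ ε m)) (fun j => σ j) := by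
  rw [← energy_comp_equiv (siteEquiv m)]
  simp only [Hc, energy, Kc_eq_dysonCoupling]
  rfl

lemma sum_corr_eq_gibbs :
    ∑ j : Site m, ∑ k : Site m, corr α γ ε m j k =
      gibbs {-1, 1} (circulant (dysonCoupling α γ ε m)) (fun σ => (∑ j, (σ j : ℝ)) ^ 2) := by
  have hreindex (F : Spin m → ℝ) : ∑ σ : Spin m, F σ =
      ∑ σ : ZMod (2 * m) → ({-1, 1} : Finset ℝ), F (σ ∘ siteEquiv m) :=
    (Equiv.sum_comp ((siteEquiv m).symm.arrowCongr (Equiv.refl _)) F).symm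
  have hsum (σ : ZMod (2 * m) → ({-1, 1} : Finset ℝ)) :
      ∑ j : Site m, ((σ ∘ siteEquiv m) j : ℝ) = ∑ j, (σ j : ℝ) :=
    Equiv.sum_comp (siteEquiv m) fun j => (σ j : ℝ)
  have hexpand (σ : Spin m) : ∑ j, ∑ k, (σ j : ℝ) * σ k * Real.exp (-Hc α γ ε m σ) =
      Real.exp (-Hc α γ ε m σ) * (∑ j, (σ j : ℝ)) ^ 2 := by
    simp only [sq, sum_mul_sum, ← sum_mul]
    exact mul_comm _ _
  simp only [corr, ← sum_div, gibbs_apply, partitionFunction_zero]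
  congr 1
  · simp only [sum_comm (s := (univ : Finset (Site m))) (t := (univ : Finset (Spin m))), hexpand]
    simp only [hreindex, Hc_comp_siteEquiv, hsum]
  · simp only [hreindex, Hc_comp_siteEquiv]

end LongRangeOrder

end DysonIsing

/-- Long-range order for the Dyson-Ising ferromagnet with `1 < α < 2`: for
every `ε > 0` there is `γ₀ ≥ ε` such that for all `γ > γ₀` the averaged
two-point function is bounded below by some `δ > 0` uniformly in the volume. -/
theorem long_range_order (α ε : ℝ) (hα1 : 1 < α) (hα2 : α < 2) (hε : 0 < ε) :
    ∃ γ₀ : ℝ, ε ≤ γ₀ ∧ ∀ γ : ℝ, γ₀ < γ →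
      ∃ δ : ℝ, 0 < δ ∧ ∀ m : ℕ, 1 ≤ m →
        δ ≤ (1 / (2 * (m : ℝ)) ^ 2) *
          ∑ j : Site m, ∑ k : Site m, corr α γ ε m j k := by
  obtain ⟨γ₀, hγ₀, hdisp⟩ :=
    DysonIsing.exists_forall_rpow_le_dispersion_dysonCoupling hα1 hα2 hε
  refine ⟨γ₀, hγ₀, fun γ hγ => ⟨1 / 2, one_half_pos, fun m hm => ?_⟩⟩
  have : NeZero m := ⟨Nat.one_le_iff_ne_zero.1 hm⟩
  have hεγ : ε ≤ γ := hγ₀.trans hγ.le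
  have horder := DysonIsing.two_mul_sq_le_gibbs_sum_sq DysonIsing.dysonCoupling_neg
    (DysonIsing.dysonCoupling_nonneg hε.le hεγ)
    (DysonIsing.posSemidef_hankel_dysonCoupling hα1 hε.le hεγ) (by linarith) (by linarith)
    (hdisp γ hγ m)
  rw [DysonIsing.sum_corr_eq_gibbs, one_div_mul_eq_div, le_div_iff₀ (by positivity)]
  linarith
end
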